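/- Let n ≥ 6. A connected simple graph G on n vertices has exactly four distinct distance Laplacian eigenvalues and largest distance Laplacian eigenvalue of multiplicity n−3 if and only if G is isomorphic to one of K_{2,n−2}, K_{n/2,n/2}+e (n even), or K_{1,n−1}+e. -/

import Mathlib

open Matrix

/-- The distance Laplacian matrix of a graph: diagonal entries are the transmissions
`Tr(v) = ∑ u, d(v,u)`, off-diagonal entries are `-d(u,v)`. -/
noncomputable def distLaplacian {V : Type*} [Fintype V] [DecidableEq V]
    (G : SimpleGraph V) : Matrix V V ℝ :=
  Matrix.of fun i j => if i = j then ∑ k : V, (G.dist i k : ℝ) else -(G.dist i j : ℝ)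

/-- The multiplicity of `μ` as an eigenvalue of `M`, i.e. the dimension of the
corresponding eigenspace. -/
noncomputable def eigMult {V : Type*} [Fintype V] (M : Matrix V V ℝ) (μ : ℝ) : ℕ :=
  Module.finrank ℝ (Module.End.eigenspace M.mulVecLin μ)

/-- The largest eigenvalue of a matrix. -/
noncomputable def lambdaMax {V : Type*} [Fintype V] (M : Matrix V V ℝ) : ℝ :=
  sSup {μ : ℝ | Module.End.HasEigenvalue M.mulVecLin μ}

/-- The transmission of a vertex. -/
noncomputable def transmission {V : Type*} [Fintype V] (G : SimpleGraph V) (v : V) : ℕ :=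
  ∑ u : V, G.dist v u

/-- The star `K_{1,k+2}` together with an extra edge joining two pendant vertices:
the centre is the `Unit` vertex, the pendant vertices are `Bool ⊕ Fin k`, and the extra
edge joins the two `Bool` pendant vertices.  (It has `k + 3` vertices.) -/
def starPlusEdge (k : ℕ) : SimpleGraph (Unit ⊕ Bool ⊕ Fin k) :=
  completeBipartiteGraph Unit (Bool ⊕ Fin k) ⊔
    SimpleGraph.fromEdgeSet {s(Sum.inr (Sum.inl false), Sum.inr (Sum.inl true))}

/-- The complete bipartite graph `K_{k+2,k+2}` together with an extra edge joining two
vertices on the same side (the two `Bool` vertices). -/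
def bipPlusEdge (k : ℕ) : SimpleGraph ((Bool ⊕ Fin k) ⊕ Fin (k + 2)) :=
  completeBipartiteGraph (Bool ⊕ Fin k) (Fin (k + 2)) ⊔
    SimpleGraph.fromEdgeSet {s(Sum.inl (Sum.inl false), Sum.inl (Sum.inl true))}


/-- Vectors orthogonal to three given ones. -/
def perp3 {n : ℕ} (w1 w2 w3 : Fin n → ℝ) : Submodule ℝ (Fin n → ℝ) :=
  LinearMap.ker (Matrix.of ![w1, w2, w3]).mulVecLin

lemma mem_perp3 {n : ℕ} (w1 w2 w3 x : Fin n → ℝ) :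
    x ∈ perp3 w1 w2 w3 ↔ w1 ⬝ᵥ x = 0 ∧ w2 ⬝ᵥ x = 0 ∧ w3 ⬝ᵥ x = 0 := by
  unfold perp3
  rw [LinearMap.mem_ker, Matrix.mulVecLin_apply]
  constructor
  · intro h
    exact ⟨congrFun h 0, congrFun h 1, congrFun h 2⟩
  · rintro ⟨h1, h2, h3⟩
    ext i
    fin_cases i
    · exact h1
    · exact h2
    · exact h3

lemma finrank_perp3 {n : ℕ} (w1 w2 w3 : Fin n → ℝ)
    (h1 : w1 ⬝ᵥ w1 ≠ 0) (h2 : w2 ⬝ᵥ w2 ≠ 0) (h3 : w3 ⬝ᵥ w3 ≠ 0)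
    (h12 : w1 ⬝ᵥ w2 = 0) (h13 : w1 ⬝ᵥ w3 = 0) (h23 : w2 ⬝ᵥ w3 = 0) :
    Module.finrank ℝ (perp3 w1 w2 w3) = n - 3 := by
  have hs : Function.Surjective (Matrix.of ![w1, w2, w3]).mulVecLin := by
    intro y
    refine ⟨(y 0 / (w1 ⬝ᵥ w1)) • w1 + (y 1 / (w2 ⬝ᵥ w2)) • w2 + (y 2 / (w3 ⬝ᵥ w3)) • w3, ?_⟩
    have h21 : w2 ⬝ᵥ w1 = 0 := by rw [dotProduct_comm]; exact h12
    have h31 : w3 ⬝ᵥ w1 = 0 := by rw [dotProduct_comm]; exact h13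
    have h32 : w3 ⬝ᵥ w2 = 0 := by rw [dotProduct_comm]; exact h23
    rw [Matrix.mulVecLin_apply]
    ext i
    fin_cases i
    · change w1 ⬝ᵥ _ = y 0
      simp only [dotProduct_add, dotProduct_smul, h12, h13, smul_eq_mul]
      field_simp; ring
    · change w2 ⬝ᵥ _ = y 1
      simp only [dotProduct_add, dotProduct_smul, h21, h23, smul_eq_mul]
      field_simp; ring
    · change w3 ⬝ᵥ _ = y 2
      simp only [dotProduct_add, dotProduct_smul, h31, h32, smul_eq_mul]
      field_simp; ring
  have h := LinearMap.finrank_range_add_finrank_ker (Matrix.of ![w1, w2, w3]).mulVecLin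
  rw [LinearMap.range_eq_top.2 hs, finrank_top] at h
  simp only [Module.finrank_fintype_fun_eq_card, Fintype.card_fin] at h
  unfold perp3
  omega

lemma eig_orth {n : ℕ} (M : Matrix (Fin n) (Fin n) ℝ) (hM : M.IsSymm) {a b : ℝ} (hab : a ≠ b)
    {x y : Fin n → ℝ} (hx : M *ᵥ x = a • x) (hy : M *ᵥ y = b • y) : x ⬝ᵥ y = 0 := by
  have h : x ⬝ᵥ (M *ᵥ y) = (M *ᵥ x) ⬝ᵥ y := by
    rw [Matrix.dotProduct_mulVec, ← Matrix.mulVec_transpose, hM.eq]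
  rw [hx, hy, dotProduct_smul, smul_dotProduct, smul_eq_mul, smul_eq_mul] at h
  have : (b - a) * (x ⬝ᵥ y) = 0 := by linarith
  rcases mul_eq_zero.1 this with h | h
  · exact absurd (by linarith) hab
  · exact h

lemma decomp {n : ℕ} (M : Matrix (Fin n) (Fin n) ℝ) (hM : M.IsSymm) {l a b c : ℝ}
    (hla : l ≠ a) (hlb : l ≠ b) (hlc : l ≠ c) (hab : a ≠ b) (hac : a ≠ c) (hbc : b ≠ c)
    {w1 w2 w3 : Fin n → ℝ} (h1 : M *ᵥ w1 = a • w1) (h2 : M *ᵥ w2 = b • w2)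
    (h3 : M *ᵥ w3 = c • w3) (n1 : w1 ⬝ᵥ w1 ≠ 0) (n2 : w2 ⬝ᵥ w2 ≠ 0) (n3 : w3 ⬝ᵥ w3 ≠ 0)
    (hl : eigMult M l = n - 3) (i j : Fin n) :
    M i j = (if i = j then l else 0) - (l - a) / (w1 ⬝ᵥ w1) * w1 i * w1 j
      - (l - b) / (w2 ⬝ᵥ w2) * w2 i * w2 j - (l - c) / (w3 ⬝ᵥ w3) * w3 i * w3 j := by
  have h12 := eig_orth M hM hab h1 h2
  have h13 := eig_orth M hM hac h1 h3
  have h23 := eig_orth M hM hbc h2 h3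
  have h21 : w2 ⬝ᵥ w1 = 0 := by rw [dotProduct_comm]; exact h12
  have h31 : w3 ⬝ᵥ w1 = 0 := by rw [dotProduct_comm]; exact h13
  have h32 : w3 ⬝ᵥ w2 = 0 := by rw [dotProduct_comm]; exact h23
  have hle : Module.End.eigenspace M.mulVecLin l ≤ perp3 w1 w2 w3 := by
    intro x hx
    rw [Module.End.mem_eigenspace_iff, Matrix.mulVecLin_apply] at hx
    rw [mem_perp3]
    exact ⟨eig_orth M hM hla.symm h1 hx, eig_orth M hM hlb.symm h2 hx,
      eig_orth M hM hlc.symm h3 hx⟩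
  have heq := Submodule.eq_of_le_of_finrank_eq hle
    (by rw [finrank_perp3 w1 w2 w3 n1 n2 n3 h12 h13 h23]; exact hl)
  set e : Fin n → ℝ := Pi.single j 1 with he
  have hd : ∀ w : Fin n → ℝ, w ⬝ᵥ e = w j := by intro w; simp [he]
  have hx : e - (w1 j / (w1 ⬝ᵥ w1)) • w1 - (w2 j / (w2 ⬝ᵥ w2)) • w2 - (w3 j / (w3 ⬝ᵥ w3)) • w3
      ∈ perp3 w1 w2 w3 := by
    rw [mem_perp3]
    simp only [dotProduct_sub, dotProduct_smul, h12, h13, h21, h23, h31, h32, hd, smul_eq_mul]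
    refine ⟨?_, ?_, ?_⟩ <;> field_simp <;> ring
  rw [← heq, Module.End.mem_eigenspace_iff, Matrix.mulVecLin_apply] at hx
  simp only [Matrix.mulVec_sub, Matrix.mulVec_smul, h1, h2, h3] at hx
  have hi := congrFun hx i
  have hMe : (M *ᵥ e) i = M i j := by simp [he]
  have hei : e i = if i = j then 1 else 0 := by simp [he, Pi.single_apply]
  simp only [Pi.sub_apply, Pi.smul_apply, smul_eq_mul, hMe, hei] at hi
  have : (if i = j then l else 0) = l * (if i = j then 1 else 0) := by split_ifs <;> simp
  rw [this]
  have e1 : ∀ (p q r s t : ℝ), (p - q) / r * s * t = p * (t / r * s) - t / r * (q * s) := by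
    intros; ring
  rw [e1, e1, e1]
  linarith

lemma spectrum_of_decomp {n : ℕ} (hn : 6 ≤ n) (M : Matrix (Fin n) (Fin n) ℝ) {l a b c : ℝ}
    (hla : a < l) (hlb : b < l) (hlc : c < l) (hab : a ≠ b) (hac : a ≠ c) (hbc : b ≠ c)
    {w1 w2 w3 : Fin n → ℝ} (n1 : w1 ⬝ᵥ w1 ≠ 0) (n2 : w2 ⬝ᵥ w2 ≠ 0) (n3 : w3 ⬝ᵥ w3 ≠ 0)
    (h12 : w1 ⬝ᵥ w2 = 0) (h13 : w1 ⬝ᵥ w3 = 0) (h23 : w2 ⬝ᵥ w3 = 0)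
    (hM : ∀ i j, M i j = (if i = j then l else 0) - (l - a) / (w1 ⬝ᵥ w1) * w1 i * w1 j
      - (l - b) / (w2 ⬝ᵥ w2) * w2 i * w2 j - (l - c) / (w3 ⬝ᵥ w3) * w3 i * w3 j) :
    {μ : ℝ | Module.End.HasEigenvalue M.mulVecLin μ}.ncard = 4 ∧
        eigMult M (lambdaMax M) = n - 3 := by
  have h21 : w2 ⬝ᵥ w1 = 0 := by rw [dotProduct_comm]; exact h12
  have h31 : w3 ⬝ᵥ w1 = 0 := by rw [dotProduct_comm]; exact h13
  have h32 : w3 ⬝ᵥ w2 = 0 := by rw [dotProduct_comm]; exact h23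
  have act : ∀ x : Fin n → ℝ, M *ᵥ x = l • x - ((l - a) / (w1 ⬝ᵥ w1) * (w1 ⬝ᵥ x)) • w1
      - ((l - b) / (w2 ⬝ᵥ w2) * (w2 ⬝ᵥ x)) • w2 - ((l - c) / (w3 ⬝ᵥ w3) * (w3 ⬝ᵥ x)) • w3 := by
    intro x
    ext i
    simp only [Matrix.mulVec, Pi.sub_apply, Pi.smul_apply, smul_eq_mul]
    have : (fun j => M i j) = (fun j => (if i = j then l else 0))
        - ((l - a) / (w1 ⬝ᵥ w1) * w1 i) • w1
        - ((l - b) / (w2 ⬝ᵥ w2) * w2 i) • w2 - ((l - c) / (w3 ⬝ᵥ w3) * w3 i) • w3 := by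
      ext j; simp [hM i j]
    rw [this, sub_dotProduct, sub_dotProduct, sub_dotProduct, smul_dotProduct, smul_dotProduct,
      smul_dotProduct]
    have h0 : (fun j => (if i = j then l else 0)) ⬝ᵥ x = l * x i := by
      simp [dotProduct]
    rw [h0]
    simp only [smul_eq_mul]
    ring
  have e1 : M *ᵥ w1 = a • w1 := by
    rw [act, h21, h31]; ext i; simp; field_simp; ring
  have e2 : M *ᵥ w2 = b • w2 := by
    rw [act, h12, h32]; ext i; simp; field_simp; ring
  have e3 : M *ᵥ w3 = c • w3 := by
    rw [act, h13, h23]; ext i; simp; field_simp; ring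
  have nz : ∀ w : Fin n → ℝ, w ⬝ᵥ w ≠ 0 → w ≠ 0 := by rintro w h rfl; simp at h
  have hes : Module.End.eigenspace M.mulVecLin l = perp3 w1 w2 w3 := by
    ext x
    rw [Module.End.mem_eigenspace_iff, Matrix.mulVecLin_apply, mem_perp3]
    constructor
    · intro hx
      rw [act] at hx
      have hx' : ((l - a) / (w1 ⬝ᵥ w1) * (w1 ⬝ᵥ x)) • w1
        + ((l - b) / (w2 ⬝ᵥ w2) * (w2 ⬝ᵥ x)) • w2 + ((l - c) / (w3 ⬝ᵥ w3) * (w3 ⬝ᵥ x)) • w3 = 0 := by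
        ext i
        have := congrFun hx i
        simp at this ⊢
        linarith
      have q1 := congrArg (fun v => w1 ⬝ᵥ v) hx'
      have q2 := congrArg (fun v => w2 ⬝ᵥ v) hx'
      have q3 := congrArg (fun v => w3 ⬝ᵥ v) hx'
      simp only [dotProduct_add, dotProduct_smul, h12, h13, h21, h23, h31, h32, smul_eq_mul,
        dotProduct_zero, mul_zero, add_zero, zero_add] at q1 q2 q3
      have da : l - a ≠ 0 := by linarith [sub_pos.2 hla] |> fun h : 0 < l - a => h.ne'
      have db : l - b ≠ 0 := (sub_pos.2 hlb).ne'
      have dc : l - c ≠ 0 := (sub_pos.2 hlc).ne'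
      refine ⟨?_, ?_, ?_⟩
      · simpa [da, n1] using q1
      · simpa [db, n2] using q2
      · simpa [dc, n3] using q3
    · rintro ⟨p1, p2, p3⟩
      rw [act, p1, p2, p3]; simp
  have hfr : Module.finrank ℝ (Module.End.eigenspace M.mulVecLin l) = n - 3 := by
    rw [hes]; exact finrank_perp3 w1 w2 w3 n1 n2 n3 h12 h13 h23
  have hev : ∀ {μ : ℝ} {w : Fin n → ℝ}, M *ᵥ w = μ • w → w ≠ 0 →
      Module.End.HasEigenvalue M.mulVecLin μ := by
    intro μ w h hw
    exact Module.End.hasEigenvalue_of_hasEigenvector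
      ⟨Module.End.mem_eigenspace_iff.2 h, hw⟩
  have hset : {μ : ℝ | Module.End.HasEigenvalue M.mulVecLin μ} = {l, a, b, c} := by
    ext μ
    simp only [Set.mem_ofPred_eq, Set.mem_insert_iff, Set.mem_singleton_iff]
    constructor
    · intro h
      obtain ⟨x, hx⟩ := h.exists_hasEigenvector
      have hx1 : M *ᵥ x = μ • x := hx.apply_eq_smul
      have hx0 : x ≠ 0 := hx.2
      by_contra! hne
      obtain ⟨k0, k1, k2, k3⟩ := hne
      have hx2 := hx1
      rw [act] at hx2
      have q1 := congrArg (fun v => w1 ⬝ᵥ v) hx2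
      have q2 := congrArg (fun v => w2 ⬝ᵥ v) hx2
      have q3 := congrArg (fun v => w3 ⬝ᵥ v) hx2
      simp only [dotProduct_sub, dotProduct_smul, h12, h13, h21, h23, h31, h32, smul_eq_mul,
        mul_zero, sub_zero] at q1 q2 q3
      have z1 : w1 ⬝ᵥ x = 0 := by
        have : (a - μ) * (w1 ⬝ᵥ x) = 0 := by field_simp at q1; linarith
        exact (mul_eq_zero.1 this).resolve_left (sub_ne_zero.2 k1.symm)
      have z2 : w2 ⬝ᵥ x = 0 := by
        have : (b - μ) * (w2 ⬝ᵥ x) = 0 := by field_simp at q2; linarith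
        exact (mul_eq_zero.1 this).resolve_left (sub_ne_zero.2 k2.symm)
      have z3 : w3 ⬝ᵥ x = 0 := by
        have : (c - μ) * (w3 ⬝ᵥ x) = 0 := by field_simp at q3; linarith
        exact (mul_eq_zero.1 this).resolve_left (sub_ne_zero.2 k3.symm)
      rw [z1, z2, z3] at hx2
      simp only [mul_zero, zero_smul, sub_zero] at hx2
      exact hx0 ((smul_eq_zero.1 (show (l - μ) • x = 0 by rw [sub_smul, hx2, sub_self])).resolve_left
        (sub_ne_zero.2 k0.symm))
    · rintro (rfl | rfl | rfl | rfl)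
      · unfold Module.End.HasEigenvalue Module.End.HasUnifEigenvalue
        intro hbot
        change Module.End.eigenspace M.mulVecLin μ = ⊥ at hbot
        rw [hbot, finrank_bot] at hfr
        omega
      · exact hev e1 (nz _ n1)
      · exact hev e2 (nz _ n2)
      · exact hev e3 (nz _ n3)
  refine ⟨?_, ?_⟩
  · rw [hset, Set.ncard_eq_toFinset_card']
    simp only [Set.toFinset_insert, Set.toFinset_singleton]
    rw [Finset.card_insert_of_notMem, Finset.card_insert_of_notMem, Finset.card_insert_of_notMem,
      Finset.card_singleton]
    · simpa using hbc
    · simpa using ⟨hab, hac⟩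
    · simpa using ⟨hla.ne', hlb.ne', hlc.ne'⟩
  · have : lambdaMax M = l := by
      unfold lambdaMax
      rw [hset]
      apply IsGreatest.csSup_eq
      constructor
      · simp
      · intro y hy
        simp only [Set.mem_insert_iff, Set.mem_singleton_iff] at hy
        rcases hy with rfl | rfl | rfl | rfl <;> linarith
    rw [this]; exact hfr


lemma planar_parseval {a b x y A B : ℝ} (h : a * x + b * y = 0)
    (hA : A * (a * a + b * b) = 1) (hB : B * (x * x + y * y) = 1) (p q r s : ℝ) :
    p * r + q * s = A * (p * a + q * b) * (r * a + s * b)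
      + B * (p * x + q * y) * (r * x + s * y) := by
  have h1 : (a * a + b * b) * (x * x + y * y) * (p * r + q * s)
      = (x * x + y * y) * ((p * a + q * b) * (r * a + s * b))
      + (a * a + b * b) * ((p * x + q * y) * (r * x + s * y)) := by
    grind
  have h2 := congrArg (fun t => A * B * t) h1
  have e1 : A * B * ((a * a + b * b) * (x * x + y * y) * (p * r + q * s))
    = (A * (a * a + b * b)) * (B * (x * x + y * y)) * (p * r + q * s) := by ring
  have e2 : A * B * ((x * x + y * y) * ((p * a + q * b) * (r * a + s * b))
      + (a * a + b * b) * ((p * x + q * y) * (r * x + s * y)))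
      = (B * (x * x + y * y)) * (A * (p * a + q * b) * (r * a + s * b))
      + (A * (a * a + b * b)) * (B * (p * x + q * y) * (r * x + s * y)) := by ring
  rw [e1, e2, hA, hB] at h2
  linarith

lemma int_gap {z : ℤ} {k : ℤ} {t : ℝ} (h : (z : ℝ) = t) (h1 : (k : ℝ) < t) (h2 : t < k + 1) :
    False := by
  rw [← h] at h1 h2
  have h1' : k < z := by exact_mod_cast h1
  have h2' : z < k + 1 := by exact_mod_cast h2
  omega

lemma int_pin {z : ℤ} {k : ℤ} {t : ℝ} (h : (z : ℝ) = t) (h1 : (k : ℝ) - 1 < t) (h2 : t < k + 1) :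
    z = k := by
  rw [← h] at h1 h2
  have h1' : k - 1 < z := by exact_mod_cast h1
  have h2' : z < k + 1 := by exact_mod_cast h2
  omega

lemma d3_type {S T A B c : ℝ} (hA : 0 < A) (hB : 0 < B) (hS0 : 0 < S) (hS1 : S < 1)
    (hT0 : 0 < T) (hT1 : T < 1) (hc : c = 2 - S + T)
    (hS : S * (1 - S) = A * (B + c - 1)) (hT : T * (1 - T) = B * (A + c - 1))
    {α β d2 d3 : ℤ} (hα1 : -1 ≤ α) (hα2 : α ≤ 1) (hβ1 : -1 ≤ β) (hβ2 : β ≤ 1)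
    (h0 : ¬ (α = 0 ∧ β = 0))
    (h2 : (d2 : ℝ) = c + α * S - α - β * B) (h3 : (d3 : ℝ) = c + α * A + β * T) :
    (α = 1 ∧ β = 1 ∧ T = B ∧ A = 1 / 2 - T ∧ S = T + 1 / 2) ∨
    (α = -1 ∧ β = -1 ∧ T = B ∧ A = 1 / 2 - T ∧ S = T + 1 / 2) ∨ (α = -1 ∧ β = 1) := by
  subst hc
  have hAS : A < S := by nlinarith
  have hTB : T + B < 1 := by nlinarith
  have k1 : (S - A) * (1 - S) = A * (B + T) := by linarith
  have k2 : T * (1 - T - B) = B * (A + 1 - S) := by linarith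
  have hα : α = -1 ∨ α = 0 ∨ α = 1 := by omega
  have hβ : β = -1 ∨ β = 0 ∨ β = 1 := by omega
  rcases hα with rfl | rfl | rfl <;> rcases hβ with rfl | rfl | rfl <;> push_cast at h2 h3
  · right; left
    have : A = 1 - S := by
      have := int_pin (k := 1) h3 (by push_cast; linarith) (by push_cast; linarith)
      rw [this] at h3; push_cast at h3; linarith
    subst this
    have a1 : 2 * S - 1 = B + T := by
      have : (1 - S) * (2 * S - 1 - B - T) = 0 := by linarith
      rcases mul_eq_zero.1 this with h | h <;> linarith
    have a2 : T = B := by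
      have : (1 - S) * (T - B) = 0 := by nlinarith
      rcases mul_eq_zero.1 this with h | h <;> linarith
    refine ⟨rfl, rfl, a2, by linarith, by linarith⟩
  · -- (-1, 0)
    exfalso
    have b1 : d2 = 2 ∨ d2 = 3 := by
      have u1 : (d2 : ℝ) < 4 := by linarith
      have u2 : (1 : ℝ) < d2 := by linarith
      have u1' : d2 < 4 := by exact_mod_cast u1
      have u2' : 1 < d2 := by exact_mod_cast u2
      omega
    rcases b1 with rfl | rfl <;> push_cast at h2
    · exact int_gap (k := 1) h3 (by push_cast; linarith) (by push_cast; linarith)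
    · exact int_gap (k := 2) h3 (by push_cast; linarith) (by push_cast; linarith)
  · right; right; simp
  · exfalso
    exact int_gap (k := 1) h3 (by push_cast; linarith) (by push_cast; linarith)
  · simp at h0
  · exfalso
    have b1 : d3 = 2 ∨ d3 = 3 := by
      have u1 : (d3 : ℝ) < 4 := by linarith
      have u2 : (1 : ℝ) < d3 := by linarith
      have u1' : d3 < 4 := by exact_mod_cast u1
      have u2' : 1 < d3 := by exact_mod_cast u2
      omega
    rcases b1 with rfl | rfl <;> push_cast at h3
    · exact int_gap (k := 1) h2 (by push_cast; linarith) (by push_cast; linarith)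
    · exact int_gap (k := 2) h2 (by push_cast; linarith) (by push_cast; linarith)
  · exfalso
    exact int_gap (k := 1) h2 (by push_cast; linarith) (by push_cast; linarith)
  · exfalso
    exact int_gap (k := 1) h2 (by push_cast; linarith) (by push_cast; linarith)
  · left
    have a1 : T = B := by
      have := int_pin (k := 1) h2 (by push_cast; linarith) (by push_cast; linarith)
      rw [this] at h2; push_cast at h2; linarith
    subst a1
    have a2 : S - A = 2 * T := by
      have : T * (S - A - 2 * T) = 0 := by linarith
      rcases mul_eq_zero.1 this with h | h <;> linarith
    have a3 : A = 1 - S := by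
      have : T * (1 - S - A) = 0 := by nlinarith
      rcases mul_eq_zero.1 this with h | h <;> linarith
    refine ⟨rfl, rfl, rfl, by linarith, by linarith⟩

lemma unit_of_pos {S : ℝ} (h : 0 < S * (1 - S)) : 0 < S ∧ S < 1 := by
  constructor <;> nlinarith

lemma sum_rest {n : ℕ} (h : Fin n → ℝ) (hs : ∑ i, h i = 0) {i1 i2 i3 i4 : Fin n}
    (n12 : i1 ≠ i2) (n13 : i1 ≠ i3) (n14 : i1 ≠ i4) (n23 : i2 ≠ i3) (n24 : i2 ≠ i4)
    (n34 : i3 ≠ i4) :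
    ∑ i ∈ Finset.univ \ {i1, i2, i3, i4}, h i = -(h i1 + h i2 + h i3 + h i4) := by
  have := Finset.sum_sdiff (Finset.subset_univ ({i1, i2, i3, i4} : Finset (Fin n))) (f := h)
  rw [hs, Finset.sum_insert (by simp [n12, n13, n14]), Finset.sum_insert (by simp [n23, n24]),
    Finset.sum_insert (by simp [n34]), Finset.sum_singleton] at this
  linarith

lemma card_rest {n : ℕ} {i1 i2 i3 i4 : Fin n}
    (n12 : i1 ≠ i2) (n13 : i1 ≠ i3) (n14 : i1 ≠ i4) (n23 : i2 ≠ i3) (n24 : i2 ≠ i4)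
    (n34 : i3 ≠ i4) :
    (Finset.univ \ ({i1, i2, i3, i4} : Finset (Fin n))).card = n - 4 := by
  rw [Finset.card_sdiff_of_subset (Finset.subset_univ _),
    Finset.card_insert_of_notMem (by simp [n12, n13, n14]),
    Finset.card_insert_of_notMem (by simp [n23, n24]),
    Finset.card_insert_of_notMem (by simp [n34]), Finset.card_singleton]
  simp

lemma sum_lin {n : ℕ} (f g : Fin n → ℝ) (hf : ∑ i, f i = 0) (hg : ∑ i, g i = 0) (a b : ℝ) :
    ∑ i, (f i * a + g i * b) = 0 := by
  rw [Finset.sum_add_distrib, ← Finset.sum_mul, ← Finset.sum_mul, hf, hg]; simp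

set_option maxHeartbeats 1000000 in
/-- No two vertices are at distance three. -/
lemma no_dist_three {n : ℕ} (hn : 6 ≤ n) (G : SimpleGraph (Fin n)) (hG : G.Connected)
    (f g : Fin n → ℝ) (hf : ∑ i, f i = 0) (hg : ∑ i, g i = 0) {c : ℝ} (hc : 1 < c)
    (hd : ∀ i j, i ≠ j → f i * f j + g i * g j = G.dist i j - c)
    {i1 i2 i3 i4 : Fin n} (d12 : G.dist i1 i2 = 1) (d23 : G.dist i2 i3 = 1)
    (d34 : G.dist i3 i4 = 1) (d13 : G.dist i1 i3 = 2) (d24 : G.dist i2 i4 = 2)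
    (d14 : G.dist i1 i4 = 3) : False := by
  have hne : ∀ {i j : Fin n}, G.dist i j ≠ 0 → i ≠ j := by
    rintro i j h rfl; simp at h
  have n12 := hne (i := i1) (j := i2) (by omega)
  have n13 := hne (i := i1) (j := i3) (by omega)
  have n14 := hne (i := i1) (j := i4) (by omega)
  have n23 := hne (i := i2) (j := i3) (by omega)
  have n24 := hne (i := i2) (j := i4) (by omega)
  have n34 := hne (i := i3) (j := i4) (by omega)
  have e12 := hd _ _ n12
  have e13 := hd _ _ n13
  have e14 := hd _ _ n14
  have e23 := hd _ _ n23
  have e24 := hd _ _ n24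
  have e34 := hd _ _ n34
  rw [d12] at e12; rw [d13] at e13; rw [d14] at e14; rw [d23] at e23; rw [d24] at e24
  rw [d34] at e34
  push_cast at e12 e13 e14 e23 e24 e34
  obtain ⟨a, ha⟩ : ∃ a, a = f i1 - f i2 := ⟨_, rfl⟩
  obtain ⟨b, hb⟩ : ∃ b, b = g i1 - g i2 := ⟨_, rfl⟩
  obtain ⟨x, hx⟩ : ∃ x, x = f i3 - f i4 := ⟨_, rfl⟩
  obtain ⟨y, hy⟩ : ∃ y, y = g i3 - g i4 := ⟨_, rfl⟩
  have u3 : f i3 * a + g i3 * b = 1 := by rw [ha, hb]; linarith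
  have u4 : f i4 * a + g i4 * b = 1 := by rw [ha, hb]; linarith
  have w1 : f i1 * x + g i1 * y = -1 := by rw [hx, hy]; linarith
  have w2 : f i2 * x + g i2 * y = -1 := by rw [hx, hy]; linarith
  have huw : a * x + b * y = 0 := by rw [hx, hy]; linarith
  have hU : 0 < a * a + b * b := by
    by_contra h
    have h1 : a = 0 := by nlinarith [mul_self_nonneg a, mul_self_nonneg b]
    have h2 : b = 0 := by nlinarith [mul_self_nonneg a, mul_self_nonneg b]
    rw [h1, h2] at u3; norm_num at u3
  have hW : 0 < x * x + y * y := by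
    by_contra h
    have h1 : x = 0 := by nlinarith [mul_self_nonneg x, mul_self_nonneg y]
    have h2 : y = 0 := by nlinarith [mul_self_nonneg x, mul_self_nonneg y]
    rw [h1, h2] at w1; norm_num at w1
  obtain ⟨A, hAd⟩ : ∃ A, A = (a * a + b * b)⁻¹ := ⟨_, rfl⟩
  obtain ⟨B, hBd⟩ : ∃ B, B = (x * x + y * y)⁻¹ := ⟨_, rfl⟩
  have hA : 0 < A := by rw [hAd]; positivity
  have hB : 0 < B := by rw [hBd]; positivity
  have hAU : A * (a * a + b * b) = 1 := by rw [hAd]; exact inv_mul_cancel₀ hU.ne'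
  have hBW : B * (x * x + y * y) = 1 := by rw [hBd]; exact inv_mul_cancel₀ hW.ne'
  have pars := fun i j : Fin n => planar_parseval huw hAU hBW (f i) (g i) (f j) (g j)
  obtain ⟨s, hs⟩ : ∃ s, s = f i1 * a + g i1 * b := ⟨_, rfl⟩
  obtain ⟨t, ht⟩ : ∃ t, t = f i3 * x + g i3 * y := ⟨_, rfl⟩
  have u2 : A * (f i2 * a + g i2 * b) = A * s - 1 := by
    rw [hs, ← hAU, ha, hb]; ring
  have w4 : B * (f i4 * x + g i4 * y) = B * t - 1 := by
    rw [ht, ← hBW, hx, hy]; ring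
  obtain ⟨S, hSd⟩ : ∃ S, S = A * s := ⟨_, rfl⟩
  obtain ⟨T, hTd⟩ : ∃ T, T = B * t := ⟨_, rfl⟩
  have hcS : c = 2 - S + T := by
    have := pars i1 i3
    rw [e13, ← hs, ← ht, u3, w1] at this
    rw [hSd, hTd]; linarith
  have hS : S * (1 - S) = A * (B + c - 1) := by
    have := pars i2 i1
    rw [u2, ← hs, w1, w2] at this
    have h' : f i2 * f i1 + g i2 * g i1 = 1 - c := by linarith
    rw [h'] at this
    have := congrArg (fun t => A * t) this
    rw [hSd]; linarith
  have hT : T * (1 - T) = B * (A + c - 1) := by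
    have := pars i4 i3
    rw [w4, ← ht, u3, u4] at this
    have h' : f i4 * f i3 + g i4 * g i3 = 1 - c := by linarith
    rw [h'] at this
    have := congrArg (fun t => B * t) this
    rw [hTd]; linarith
  have hSp : 0 < S * (1 - S) := by rw [hS]; exact mul_pos hA (by linarith)
  have hTp : 0 < T * (1 - T) := by rw [hT]; exact mul_pos hB (by linarith)
  obtain ⟨hS0, hS1⟩ := unit_of_pos hSp
  obtain ⟨hT0, hT1⟩ := unit_of_pos hTp
  -- types
  have key : ∀ i, i ∈ Finset.univ \ ({i1, i2, i3, i4} : Finset (Fin n)) →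
      ∃ α β d2 d3 : ℤ, f i * a + g i * b = α ∧ f i * x + g i * y = β ∧
      (d2 = G.dist i i2 ∧ d3 = G.dist i i3 ∧ d2 + α = G.dist i i1 ∧ d3 - β = G.dist i i4) ∧
      (d2 : ℝ) = c + α * S - α - β * B ∧ (d3 : ℝ) = c + α * A + β * T ∧
      ((α = 1 ∧ β = 1 ∧ T = B ∧ A = 1 / 2 - T ∧ S = T + 1 / 2) ∨
      (α = -1 ∧ β = -1 ∧ T = B ∧ A = 1 / 2 - T ∧ S = T + 1 / 2) ∨ (α = -1 ∧ β = 1)) := by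
    intro i hi
    simp only [Finset.mem_sdiff, Finset.mem_univ, true_and, Finset.mem_insert,
      Finset.mem_singleton, not_or] at hi
    obtain ⟨m1, m2, m3, m4⟩ := hi
    have f1 := hd _ _ m1
    have f2 := hd _ _ m2
    have f3 := hd _ _ m3
    have f4 := hd _ _ m4
    have t1 := hG.dist_triangle (u := i) (v := i1) (w := i2)
    have t2 := hG.dist_triangle (u := i) (v := i2) (w := i1)
    have t3 := hG.dist_triangle (u := i) (v := i3) (w := i4)
    have t4 := hG.dist_triangle (u := i) (v := i4) (w := i3)
    rw [G.dist_comm (u := i2) (v := i1)] at t2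
    rw [G.dist_comm (u := i4) (v := i3)] at t4
    have g1 : f i * a + g i * b = (((G.dist i i1 : ℤ) - G.dist i i2 : ℤ) : ℝ) := by
      rw [ha, hb]; push_cast; linarith
    have g2 : f i * x + g i * y = (((G.dist i i3 : ℤ) - G.dist i i4 : ℤ) : ℝ) := by
      rw [hx, hy]; push_cast; linarith
    obtain ⟨α, hα⟩ : ∃ α : ℤ, α = (G.dist i i1 : ℤ) - G.dist i i2 := ⟨_, rfl⟩
    obtain ⟨β, hβ⟩ : ∃ β : ℤ, β = (G.dist i i3 : ℤ) - G.dist i i4 := ⟨_, rfl⟩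
    rw [← hα] at g1
    rw [← hβ] at g2
    have r2 : (((G.dist i i2 : ℤ) : ℤ) : ℝ) = c + α * S - α - β * B := by
      have := pars i2 i
      rw [u2, w2, g1, g2, ← hSd] at this
      push_cast
      linarith
    have r3 : (((G.dist i i3 : ℤ) : ℤ) : ℝ) = c + α * A + β * T := by
      have := pars i3 i
      rw [u3, ← ht, g1, g2, ← hTd] at this
      push_cast
      linarith
    refine ⟨α, β, G.dist i i2, G.dist i i3, g1, g2, ⟨rfl, rfl, by omega, by omega⟩, r2, r3, ?_⟩
    refine d3_type hA hB hS0 hS1 hT0 hT1 hcS hS hT (by omega) (by omega) (by omega) (by omega)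
      ?_ r2 r3
    rintro ⟨rfl, rfl⟩
    obtain ⟨j, hj⟩ : ∃ j, G.Adj i j := by
      have : Nontrivial (Fin n) := Fin.nontrivial_iff_two_le.2 (by omega)
      obtain ⟨j, hj⟩ := hG.preconnected.exists_adj_of_nontrivial i
      exact ⟨j, hj⟩
    have q1 := pars i j
    rw [g1, g2, hd i j hj.ne, SimpleGraph.dist_eq_one_iff_adj.2 hj] at q1
    push_cast at q1
    linarith
  have sumα := sum_rest (fun i => f i * a + g i * b) (sum_lin f g hf hg a b)
    n12 n13 n14 n23 n24 n34
  have sumβ := sum_rest (fun i => f i * x + g i * y) (sum_lin f g hf hg x y)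
    n12 n13 n14 n23 n24 n34
  simp only [u3, u4, w1, w2, ← hs, ← ht] at sumα sumβ
  have sumα' : A * ∑ i ∈ Finset.univ \ {i1, i2, i3, i4}, (f i * a + g i * b)
      = -(2 * S - 1 + 2 * A) := by
    rw [sumα, hSd]; linarith
  have sumβ' : B * ∑ i ∈ Finset.univ \ {i1, i2, i3, i4}, (f i * x + g i * y)
      = 2 * B + 1 - 2 * T := by
    rw [sumβ, hTd]; linarith
  by_cases hX : T = B ∧ A = 1 / 2 - T ∧ S = T + 1 / 2
  · obtain ⟨x1, x2, x3⟩ := hX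
    have hab : ∑ i ∈ Finset.univ \ {i1, i2, i3, i4}, (f i * a + g i * b)
        = ∑ i ∈ Finset.univ \ {i1, i2, i3, i4}, (f i * x + g i * y) := by
      apply Finset.sum_congr rfl
      intro i hi
      obtain ⟨α, β, d2, d3, g1, g2, -, r2, r3, h | h | h⟩ := key i hi
      · rw [g1, g2, h.1, h.2.1]
      · rw [g1, g2, h.1, h.2.1]
      · exfalso
        rw [h.1, h.2] at r3
        push_cast at r3
        exact int_gap (k := 1) r3 (by push_cast; linarith) (by push_cast; linarith)
    rw [hab] at sumα'
    have p1 : ∑ i ∈ Finset.univ \ {i1, i2, i3, i4}, (f i * x + g i * y) < 0 := by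
      by_contra hh
      have := mul_nonneg hA.le (not_lt.1 hh)
      linarith
    have := mul_neg_of_pos_of_neg hB p1
    linarith
  · have key' : ∀ i, i ∈ Finset.univ \ ({i1, i2, i3, i4} : Finset (Fin n)) →
        ∃ α β d2 d3 : ℤ, f i * a + g i * b = α ∧ f i * x + g i * y = β ∧
        (d2 = G.dist i i2 ∧ d3 = G.dist i i3 ∧ d2 + α = G.dist i i1 ∧ d3 - β = G.dist i i4) ∧
        (d2 : ℝ) = c + α * S - α - β * B ∧ (d3 : ℝ) = c + α * A + β * T ∧ α = -1 ∧ β = 1 := by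
      intro i hi
      obtain ⟨α, β, d2, d3, g1, g2, q, r2, r3, h | h | h⟩ := key i hi
      · exact absurd h.2.2 hX
      · exact absurd h.2.2 hX
      · exact ⟨α, β, d2, d3, g1, g2, q, r2, r3, h⟩
    have hcard := card_rest n12 n13 n14 n23 n24 n34
    have c1 : ∑ i ∈ Finset.univ \ {i1, i2, i3, i4}, (f i * a + g i * b) = -((n : ℝ) - 4) := by
      rw [Finset.sum_congr rfl (g := fun _ => (-1 : ℝ))]
      · rw [Finset.sum_const, hcard, nsmul_eq_mul, Nat.cast_sub (by omega)]; push_cast; ring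
      · intro i hi
        obtain ⟨α, β, d2, d3, g1, g2, q, r2, r3, h, h'⟩ := key' i hi
        rw [g1, h]; simp
    have c2 : ∑ i ∈ Finset.univ \ {i1, i2, i3, i4}, (f i * x + g i * y) = (n : ℝ) - 4 := by
      rw [Finset.sum_congr rfl (g := fun _ => (1 : ℝ))]
      · rw [Finset.sum_const, hcard, nsmul_eq_mul, Nat.cast_sub (by omega)]; push_cast; ring
      · intro i hi
        obtain ⟨α, β, d2, d3, g1, g2, q, r2, r3, h, h'⟩ := key' i hi
        rw [g2, h']; simp
    have hn6 : (6 : ℝ) ≤ n := by exact_mod_cast hn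
    rw [c1] at sumα'
    rw [c2] at sumβ'
    have hS2 : 1 / 2 ≤ S := by nlinarith [mul_nonneg hA.le (sub_nonneg.2 hn6)]
    have hT2 : T ≤ 1 / 2 := by nlinarith [mul_nonneg hB.le (sub_nonneg.2 hn6)]
    obtain ⟨i, hi⟩ : (Finset.univ \ ({i1, i2, i3, i4} : Finset (Fin n))).Nonempty := by
      rw [← Finset.card_pos, hcard]; omega
    obtain ⟨α, β, d2, d3, g1, g2, ⟨q1, q2, q3, q4⟩, r2, r3, h, h'⟩ := key' i hi
    rw [h, h'] at r2 r3
    have hd2 : d2 < 3 := by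
      have : (d2 : ℝ) < 3 := by rw [r2]; push_cast; linarith
      exact_mod_cast this
    have hd3 : d3 < 3 := by
      have : (d3 : ℝ) < 3 := by rw [r3]; push_cast; linarith
      exact_mod_cast this
    have tr := hG.dist_triangle (u := i1) (v := i) (w := i4)
    rw [G.dist_comm (u := i1) (v := i)] at tr
    omega


lemma planar_gram {a b x y E F D : ℝ} (h : a * x + b * y = -2) (hE : E = a * a + b * b)
    (hF : F = x * x + y * y) (hD : D = E * F - 4) (p q r s : ℝ) :
    D * (p * r + q * s) = F * ((p * a + q * b) * (r * a + s * b))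
      + E * ((p * x + q * y) * (r * x + s * y))
      + 2 * ((p * a + q * b) * (r * x + s * y) + (p * x + q * y) * (r * a + s * b)) := by
  subst hD hE hF
  have h4 : (4 : ℝ) = (a * x + b * y) * (a * x + b * y) := by rw [h]; norm_num
  have h2 : (2 : ℝ) = -(a * x + b * y) := by rw [h]; norm_num
  rw [h4, h2]
  ring

lemma d2_type {E F D M R c : ℝ} (hE : 0 < E) (hF : 0 < F) (hD : 0 < D) (hM : 0 < M)
    (hEF : E * F = D + 4) (k1 : F * (M * M) = D * (2 - c + E / 4))
    (hc1 : 1 < c) (hc2 : c < 2)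
    {d1 d2 d3 d4 : ℤ} (h1 : d1 = 1 ∨ d1 = 2) (h2 : d2 = 1 ∨ d2 = 2)
    (h3 : d3 = 1 ∨ d3 = 2) (h4 : d4 = 1 ∨ d4 = 2)
    (h0 : ¬ (d1 = d4 ∧ d2 = d3))
    (e1 : D * (d1 - c) = M * (F * (d1 - d4) + 2 * (d2 - d3)) + (d1 - d4) * D / 2)
    (e2 : D * (d2 - c) = R * (E * (d2 - d3) + 2 * (d1 - d4)) + (d2 - d3) * D / 2) :
    (d1 - d4 = 0 ∧ (d2 - d3 = 1 ∨ d2 - d3 = -1) ∧ (2 * (d2 - d3) * M = D * (d1 - c)) ∧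
      R * (d2 - d3) * E = D * (3 / 2 - c)) ∨
    (d1 - d4 = 1 ∧ d2 - d3 = -1 ∧ M * (F - 2) = D * (3 / 2 - c)) ∨
    (d1 - d4 = -1 ∧ d2 - d3 = 1 ∧ M * (2 - F) = D * (3 / 2 - c) ∧
      R * (E - 2) = D * (3 / 2 - c)) := by
  have hMF : D / 2 < M * F := by
    by_contra hh
    have hh := not_lt.1 hh
    have q1 : (M * F) * (M * F) ≤ (D / 2) * (D / 2) :=
      mul_self_le_mul_self (by positivity) hh
    have q2 : (M * F) * (M * F) = D * (F * (2 - c)) + D * (D + 4) / 4 := by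
      have : (M * F) * (M * F) = F * (F * (M * M)) := by ring
      rw [this, k1, ← hEF]; ring
    have q3 : 0 < D * (F * (2 - c)) := mul_pos hD (mul_pos hF (by linarith))
    nlinarith
  have hq1 : D * (3 / 2 - c) < D / 2 := by nlinarith
  have hq2 : - (D / 2) < D * (3 / 2 - c) := by nlinarith
  rcases h1 with rfl | rfl <;> rcases h4 with rfl | rfl <;> rcases h2 with rfl | rfl <;>
    rcases h3 with rfl | rfl <;> (try exact absurd ⟨rfl, rfl⟩ h0) <;> norm_num at e1 e2 ⊢
  all_goals first
    | (constructor <;> linarith)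
    | linarith
    | (exfalso; linarith)

set_option maxHeartbeats 1000000 in
lemma no_P4_pos {n : ℕ} (hn : 6 ≤ n) (G : SimpleGraph (Fin n)) (hG : G.Connected)
    (hdiam : ∀ i j, i ≠ j → G.dist i j = 1 ∨ G.dist i j = 2)
    (f g : Fin n → ℝ) (hf : ∑ i, f i = 0) (hg : ∑ i, g i = 0) {c : ℝ} (hc : 1 < c) (hc2 : c < 2)
    (hd : ∀ i j, i ≠ j → f i * f j + g i * g j = G.dist i j - c)
    {i1 i2 i3 i4 : Fin n} (d12 : G.dist i1 i2 = 1) (d23 : G.dist i2 i3 = 1)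
    (d34 : G.dist i3 i4 = 1) (d13 : G.dist i1 i3 = 2) (d24 : G.dist i2 i4 = 2)
    (d14 : G.dist i1 i4 = 2)
    (hpos : f i4 * f i4 + g i4 * g i4 < f i1 * f i1 + g i1 * g i1) : False := by
  have hne : ∀ {i j : Fin n}, G.dist i j ≠ 0 → i ≠ j := by
    rintro i j h rfl; simp at h
  have n12 := hne (i := i1) (j := i2) (by omega)
  have n13 := hne (i := i1) (j := i3) (by omega)
  have n14 := hne (i := i1) (j := i4) (by omega)
  have n23 := hne (i := i2) (j := i3) (by omega)
  have n24 := hne (i := i2) (j := i4) (by omega)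
  have n34 := hne (i := i3) (j := i4) (by omega)
  have e12 := hd _ _ n12
  have e13 := hd _ _ n13
  have e14 := hd _ _ n14
  have e23 := hd _ _ n23
  have e24 := hd _ _ n24
  have e34 := hd _ _ n34
  rw [d12] at e12; rw [d13] at e13; rw [d14] at e14; rw [d23] at e23; rw [d24] at e24
  rw [d34] at e34
  push_cast at e12 e13 e14 e23 e24 e34
  obtain ⟨a, ha⟩ : ∃ a, a = f i1 - f i4 := ⟨_, rfl⟩
  obtain ⟨b, hb⟩ : ∃ b, b = g i1 - g i4 := ⟨_, rfl⟩
  obtain ⟨x, hx⟩ : ∃ x, x = f i2 - f i3 := ⟨_, rfl⟩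
  obtain ⟨y, hy⟩ : ∃ y, y = g i2 - g i3 := ⟨_, rfl⟩
  have u2 : f i2 * a + g i2 * b = -1 := by rw [ha, hb]; linarith
  have u3 : f i3 * a + g i3 * b = 1 := by rw [ha, hb]; linarith
  have w1 : f i1 * x + g i1 * y = -1 := by rw [hx, hy]; linarith
  have w4 : f i4 * x + g i4 * y = 1 := by rw [hx, hy]; linarith
  have huw : a * x + b * y = -2 := by rw [hx, hy]; linarith
  obtain ⟨E, hE⟩ : ∃ E, E = a * a + b * b := ⟨_, rfl⟩
  obtain ⟨F, hF⟩ : ∃ F, F = x * x + y * y := ⟨_, rfl⟩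
  obtain ⟨D, hD⟩ : ∃ D, D = E * F - 4 := ⟨_, rfl⟩
  obtain ⟨M, hM⟩ : ∃ M, M = f i1 * a + g i1 * b - E / 2 := ⟨_, rfl⟩
  obtain ⟨R, hR⟩ : ∃ R, R = f i2 * x + g i2 * y - F / 2 := ⟨_, rfl⟩
  have u1 : f i1 * a + g i1 * b = M + E / 2 := by rw [hM]; ring
  have w2 : f i2 * x + g i2 * y = R + F / 2 := by rw [hR]; ring
  have u4 : f i4 * a + g i4 * b = M - E / 2 := by
    rw [hM, hE]; nth_rw 3 [ha]; nth_rw 3 [hb]; rw [ha, hb]; ring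
  have w3 : f i3 * x + g i3 * y = R - F / 2 := by
    rw [hR, hF, hx, hy]; ring
  have hE0 : 0 ≤ E := by rw [hE]; exact add_nonneg (mul_self_nonneg _) (mul_self_nonneg _)
  have hF0 : 0 ≤ F := by rw [hF]; exact add_nonneg (mul_self_nonneg _) (mul_self_nonneg _)
  have hDsq : D = (a * y - b * x) * (a * y - b * x) := by
    have h4 : (4 : ℝ) = (a * x + b * y) * (a * x + b * y) := by rw [huw]; norm_num
    rw [hD, h4, hE, hF]; ring
  have hD0 : 0 ≤ D := by rw [hDsq]; exact mul_self_nonneg _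
  have hEF : E * F = D + 4 := by linarith
  have hEp : 0 < E := by
    rcases hE0.lt_or_eq with h | h
    · exact h
    · rw [← h] at hEF; linarith
  have hFp : 0 < F := by
    rcases hF0.lt_or_eq with h | h
    · exact h
    · rw [← h] at hEF; linarith
  have hMp : 0 < M := by
    have : 2 * M = (f i1 * f i1 + g i1 * g i1) - (f i4 * f i4 + g i4 * g i4) := by
      have : 2 * M = (f i1 * a + g i1 * b) + (f i4 * a + g i4 * b) := by linarith
      rw [this, ha, hb]; ring
    linarith
  have gram := fun i j : Fin n => planar_gram huw hE hF hD (f i) (g i) (f j) (g j)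
  have k1 : F * (M * M) = D * (2 - c + E / 4) := by
    have := gram i1 i4
    rw [e14, u1, u4, w1, w4] at this
    linear_combination -this - E / 4 * hD
  have k2 : E * (R * R) = D * (1 - c + F / 4) := by
    have := gram i2 i3
    rw [e23, u2, u3, w2, w3] at this
    linear_combination -this - F / 4 * hD
  have k3 : 2 * M * R = D * (3 / 2 - c) := by
    have := gram i1 i2
    rw [e12, u1, u2, w1, w2] at this
    linear_combination -this - hD / 2
  have hDp : 0 < D := by
    rcases hD0.lt_or_eq with h | h
    · exact h
    · rw [← h, zero_mul] at k1
      have := mul_pos hFp (mul_pos hMp hMp)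
      linarith
  have key : ∀ i, i ∈ Finset.univ \ ({i1, i2, i3, i4} : Finset (Fin n)) →
      ∃ d1 α β : ℤ, f i * a + g i * b = α ∧ f i * x + g i * y = β ∧ (d1 = 1 ∨ d1 = 2) ∧
      ((α = 0 ∧ (β = 1 ∨ β = -1) ∧ (2 * β * M = D * (d1 - c)) ∧
      R * β * E = D * (3 / 2 - c)) ∨
      (α = 1 ∧ β = -1 ∧ M * (F - 2) = D * (3 / 2 - c)) ∨
      (α = -1 ∧ β = 1 ∧ M * (2 - F) = D * (3 / 2 - c) ∧
      R * (E - 2) = D * (3 / 2 - c))) := by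
    intro i hi
    simp only [Finset.mem_sdiff, Finset.mem_univ, true_and, Finset.mem_insert,
      Finset.mem_singleton, not_or] at hi
    obtain ⟨m1, m2, m3, m4⟩ := hi
    have f1 := hd _ _ m1
    have f2 := hd _ _ m2
    have f3 := hd _ _ m3
    have f4 := hd _ _ m4
    have o1 := hdiam _ _ m1
    have o2 := hdiam _ _ m2
    have o3 := hdiam _ _ m3
    have o4 := hdiam _ _ m4
    have g1 : f i * a + g i * b = (((G.dist i i1 : ℤ) : ℝ) - ((G.dist i i4 : ℤ) : ℝ)) := by
      rw [ha, hb]; push_cast; linarith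
    have g2 : f i * x + g i * y = (((G.dist i i2 : ℤ) : ℝ) - ((G.dist i i3 : ℤ) : ℝ)) := by
      rw [hx, hy]; push_cast; linarith
    refine ⟨G.dist i i1, (G.dist i i1 : ℤ) - G.dist i i4, (G.dist i i2 : ℤ) - G.dist i i3,
      by rw [g1]; push_cast; ring, by rw [g2]; push_cast; ring, by omega, ?_⟩
    have r1 := gram i i1
    have r2 := gram i i2
    rw [f1, u1, w1, g1, g2] at r1
    rw [f2, u2, w2, g1, g2] at r2
    have := d2_type (E := E) (F := F) (D := D) (M := M) (R := R) (c := c)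
      (d1 := G.dist i i1) (d2 := G.dist i i2) (d3 := G.dist i i3)
      (d4 := G.dist i i4) hEp hFp hDp hMp hEF k1 hc hc2 (by omega) (by omega) (by omega)
      (by omega) ?_ ?_ ?_
    · simpa only [Int.cast_sub] using this
    · rintro ⟨p1, p2⟩
      rw [p1, sub_self] at g1
      rw [p2, sub_self] at g2
      obtain ⟨j, hj⟩ : ∃ j, G.Adj i j := by
        have : Nontrivial (Fin n) := Fin.nontrivial_iff_two_le.2 (by omega)
        exact hG.preconnected.exists_adj_of_nontrivial i
      have q1 := gram i j
      rw [g1, g2, hd i j hj.ne, SimpleGraph.dist_eq_one_iff_adj.2 hj] at q1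
      push_cast at q1
      have : D * (c - 1) = 0 := by linarith
      have := mul_pos hDp (sub_pos.2 hc)
      linarith
    · push_cast at r1 ⊢
      linear_combination r1 - ((G.dist i i1 : ℝ) - G.dist i i4) / 2 * hD
    · push_cast at r2 ⊢
      linear_combination r2 - ((G.dist i i2 : ℝ) - G.dist i i3) / 2 * hD
  have sumα := sum_rest (fun i => f i * a + g i * b) (sum_lin f g hf hg a b)
    n12 n13 n14 n23 n24 n34
  have sumβ := sum_rest (fun i => f i * x + g i * y) (sum_lin f g hf hg x y)
    n12 n13 n14 n23 n24 n34
  simp only [u1, u2, u3, u4, w1, w2, w3, w4] at sumα sumβ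
  -- a vertex of type (-1, 1)
  have hex : M * (2 - F) = D * (3 / 2 - c) ∧ R * (E - 2) = D * (3 / 2 - c) := by
    by_contra hno
    have : 0 ≤ ∑ i ∈ Finset.univ \ {i1, i2, i3, i4}, (f i * a + g i * b) := by
      apply Finset.sum_nonneg
      intro i hi
      obtain ⟨d1, α, β, g1, g2, -, h | h | h⟩ := key i hi
      · rw [g1, h.1]; simp
      · rw [g1, h.1]; simp
      · exact absurd h.2.2 hno
    rw [sumα] at this
    linarith
  obtain ⟨x1, x2⟩ := hex
  have hR2 : R = (2 - F) / 2 := by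
    have : M * (2 - F - 2 * R) = 0 := by linarith
    rcases mul_eq_zero.1 this with h | h <;> linarith
  by_cases hR0 : R = 0
  · have hF2 : F = 2 := by linarith
    have hc32 : c = 3 / 2 := by
      rw [hR0, mul_zero] at k3
      rcases mul_eq_zero.1 k3.symm with h | h <;> linarith
    have hab : ∑ i ∈ Finset.univ \ {i1, i2, i3, i4}, (f i * a + g i * b)
        = -∑ i ∈ Finset.univ \ {i1, i2, i3, i4}, (f i * x + g i * y) := by
      rw [← Finset.sum_neg_distrib]
      apply Finset.sum_congr rfl
      intro i hi
      obtain ⟨d1, α, β, g1, g2, o, h | h | h⟩ := key i hi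
      · exfalso
        obtain ⟨h1, h2, h3, h4⟩ := h
        rw [hF2] at hEF k1
        have hDE : D = 2 * E - 4 := by linarith
        have hsq : (4 * M) * (4 * M) = D * D := by
          rcases h2 with rfl | rfl <;> rcases o with rfl | rfl <;> push_cast at h3
          · have : 4 * M = -D := by rw [hc32] at h3; linarith
            rw [this]; ring
          · have : 4 * M = D := by rw [hc32] at h3; linarith
            rw [this]
          · have : 4 * M = D := by rw [hc32] at h3; linarith
            rw [this]
          · have : 4 * M = -D := by rw [hc32] at h3; linarith
            rw [this]; ring
        have : D * (2 * (2 + E) - D) = 0 := by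
          rw [hc32] at k1
          linear_combination hsq - 8 * k1
        rcases mul_eq_zero.1 this with h | h <;> linarith
      · rw [g1, g2, h.1, h.2.1]; simp
      · rw [g1, g2, h.1, h.2.1]; simp
    rw [sumα, sumβ, hR0] at hab
    linarith
  · have hME : M = (E - 2) / 2 := by
      have : R * (E - 2 - 2 * M) = 0 := by linarith
      rcases mul_eq_zero.1 this with h | h
      · exact absurd h hR0
      · linarith
    have hab : ∑ i ∈ Finset.univ \ {i1, i2, i3, i4}, (f i * a + g i * b)
        = -∑ i ∈ Finset.univ \ {i1, i2, i3, i4}, (f i * x + g i * y) := by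
      rw [← Finset.sum_neg_distrib]
      apply Finset.sum_congr rfl
      intro i hi
      obtain ⟨d1, α, β, g1, g2, o, h | h | h⟩ := key i hi
      · exfalso
        obtain ⟨h1, h2, h3, h4⟩ := h
        rw [← x2] at h4
        rcases h2 with rfl | rfl <;> push_cast at h4
        · exact hR0 (by linarith)
        · have : R * (2 * E - 2) = 0 := by linarith
          rcases mul_eq_zero.1 this with h | h
          · exact hR0 h
          · linarith
      · rw [g1, g2, h.1, h.2.1]; simp
      · rw [g1, g2, h.1, h.2.1]; simp
    rw [sumα, sumβ] at hab
    have hMR : M = -R := by linarith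
    have hEF2 : F = E := by linarith
    rw [hEF2] at k1 k2
    have : D = 0 := by rw [hMR] at k1; linear_combination k2 - k1
    linarith


lemma eq_typeA {E P Q c S S' : ℝ} (hE : 0 < E) (hE2 : E ≠ 2) (hc1 : 1 < c) (hc2 : c < 2)
    (kP : P * P = E * (2 - c) + E * E / 4) (kQ : Q * Q = 1 + E * (1 - c))
    (kPQ : P * Q = E * (3 / 2 - c)) {d1 d2 d1' d2' d : ℤ}
    (h1 : d1 = 1 ∨ d1 = 2) (h2 : d2 = 1 ∨ d2 = 2)
    (h1' : d1' = 1 ∨ d1' = 2) (h2' : d2' = 1 ∨ d2' = 2) (h : d = 1 ∨ d = 2)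
    (e1 : P * S = E * (d1 - c)) (e2 : Q * S = E * (d2 - c))
    (e1' : P * S' = E * (d1' - c)) (e2' : Q * S' = E * (d2' - c))
    (e : S * S' = E * (d - c)) : False := by
  have p1 : 0 < E * (2 - c) := mul_pos hE (by linarith)
  have p2 : 0 < E * (c - 1) := mul_pos hE (by linarith)
  have pEE : 0 < E * E := mul_pos hE hE
  -- equal types are impossible
  have eqt : ∀ s : ℝ, P * s = Q * s → s ≠ 0 → False := by
    intro s hs hs0
    have hPQ : P = Q := mul_right_cancel₀ hs0 hs
    rw [hPQ] at kPQ
    apply hE2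
    linarith
  have same : S = S' → False := by
    intro hS
    rw [← hS] at e
    have hd : d = 2 := by
      rcases h with rfl | rfl
      · exfalso
        push_cast at e
        have := mul_self_nonneg S
        linarith
      · rfl
    subst hd
    push_cast at e
    have hS0 : S ≠ 0 := by
      rintro rfl
      linarith
    rcases h1 with rfl | rfl
    · rcases h2 with rfl | rfl
      · exact eqt S (by rw [e1, e2]) hS0
      · push_cast at e1 e2
        have : Q = S := mul_right_cancel₀ hS0 (by linarith)
        rw [← this] at e1
        linarith
    · rcases h2 with rfl | rfl
      · push_cast at e1 e2
        have : P = S := mul_right_cancel₀ hS0 (by linarith)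
        rw [← this] at e
        linarith
      · exact eqt S (by rw [e1, e2]) hS0
  have S0 : S ≠ 0 := by
    rintro rfl
    rcases h1 with rfl | rfl <;> push_cast at e1 <;> linarith
  have S0' : S' ≠ 0 := by
    rintro rfl
    rcases h1' with rfl | rfl <;> push_cast at e1' <;> linarith
  have P0 : P ≠ 0 := by
    rintro rfl
    linarith
  have cross : (P * S) * (Q * S') = (Q * S) * (P * S') := by ring
  have key : d1 = 1 ∧ d2 = 2 ∧ d1' = 2 ∧ d2' = 1 ∨ d1 = 2 ∧ d2 = 1 ∧ d1' = 1 ∧ d2' = 2 := by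
    by_contra hk
    have n1 : d1 ≠ d2 := by
      rintro rfl
      exact eqt S (by rw [e1, e2]) S0
    have n2 : d1' ≠ d2' := by
      rintro rfl
      exact eqt S' (by rw [e1', e2']) S0'
    have : d1 = d1' := by omega
    apply same
    apply mul_left_cancel₀ P0
    rw [e1, e1', this]
  have hc : c = 3 / 2 := by
    rw [e1, e2, e1', e2'] at cross
    have : E * E * (3 - 2 * c) = 0 := by
      rcases key with ⟨rfl, rfl, rfl, rfl⟩ | ⟨rfl, rfl, rfl, rfl⟩ <;> push_cast at cross <;> linarith
    rcases mul_eq_zero.1 this with h | h <;> linarith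
  have : P * Q = 0 := by rw [kPQ, hc]; ring
  rcases mul_eq_zero.1 this with h | h
  · exact P0 h
  · rw [h, zero_mul] at e2
    rcases h2 with rfl | rfl <;> push_cast at e2 <;> linarith

set_option maxHeartbeats 1000000 in
lemma no_P4_eq {n : ℕ} (hn : 6 ≤ n) (G : SimpleGraph (Fin n))
    (hdiam : ∀ i j, i ≠ j → G.dist i j = 1 ∨ G.dist i j = 2)
    (f g : Fin n → ℝ) (hf : ∑ i, f i = 0) (hg : ∑ i, g i = 0) {c : ℝ} (hc : 1 < c) (hc2 : c < 2)
    (hd : ∀ i j, i ≠ j → f i * f j + g i * g j = G.dist i j - c)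
    {i1 i2 i3 i4 : Fin n} (d12 : G.dist i1 i2 = 1) (d23 : G.dist i2 i3 = 1)
    (d34 : G.dist i3 i4 = 1) (d13 : G.dist i1 i3 = 2) (d24 : G.dist i2 i4 = 2)
    (d14 : G.dist i1 i4 = 2)
    (heq : f i4 * f i4 + g i4 * g i4 = f i1 * f i1 + g i1 * g i1) : False := by
  have hne : ∀ {i j : Fin n}, G.dist i j ≠ 0 → i ≠ j := by
    rintro i j h rfl; simp at h
  have n12 := hne (i := i1) (j := i2) (by omega)
  have n13 := hne (i := i1) (j := i3) (by omega)
  have n14 := hne (i := i1) (j := i4) (by omega)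
  have n23 := hne (i := i2) (j := i3) (by omega)
  have n24 := hne (i := i2) (j := i4) (by omega)
  have n34 := hne (i := i3) (j := i4) (by omega)
  have e12 := hd _ _ n12
  have e13 := hd _ _ n13
  have e14 := hd _ _ n14
  have e23 := hd _ _ n23
  have e24 := hd _ _ n24
  have e34 := hd _ _ n34
  rw [d12] at e12; rw [d13] at e13; rw [d14] at e14; rw [d23] at e23; rw [d24] at e24
  rw [d34] at e34
  push_cast at e12 e13 e14 e23 e24 e34
  obtain ⟨a, ha⟩ : ∃ a, a = f i1 - f i4 := ⟨_, rfl⟩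
  obtain ⟨b, hb⟩ : ∃ b, b = g i1 - g i4 := ⟨_, rfl⟩
  obtain ⟨x, hx⟩ : ∃ x, x = f i2 - f i3 := ⟨_, rfl⟩
  obtain ⟨y, hy⟩ : ∃ y, y = g i2 - g i3 := ⟨_, rfl⟩
  have u2 : f i2 * a + g i2 * b = -1 := by rw [ha, hb]; linarith
  have u3 : f i3 * a + g i3 * b = 1 := by rw [ha, hb]; linarith
  have w1 : f i1 * x + g i1 * y = -1 := by rw [hx, hy]; linarith
  have w4 : f i4 * x + g i4 * y = 1 := by rw [hx, hy]; linarith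
  have huw : a * x + b * y = -2 := by rw [hx, hy]; linarith
  obtain ⟨E, hE⟩ : ∃ E, E = a * a + b * b := ⟨_, rfl⟩
  obtain ⟨F, hF⟩ : ∃ F, F = x * x + y * y := ⟨_, rfl⟩
  obtain ⟨D, hD⟩ : ∃ D, D = E * F - 4 := ⟨_, rfl⟩
  have u1 : f i1 * a + g i1 * b = E / 2 := by
    rw [hE, ha, hb]; linear_combination -heq / 2
  have u4 : f i4 * a + g i4 * b = - E / 2 := by
    rw [hE, ha, hb]; linear_combination -heq / 2
  have hE0 : 0 ≤ E := by rw [hE]; exact add_nonneg (mul_self_nonneg _) (mul_self_nonneg _)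
  have hDsq : D = (a * y - b * x) * (a * y - b * x) := by
    have h4 : (4 : ℝ) = (a * x + b * y) * (a * x + b * y) := by rw [huw]; norm_num
    rw [hD, h4, hE, hF]; ring
  have hDD : D = 0 := by
    have := planar_gram huw hE hF hD (f i1) (g i1) (f i4) (g i4)
    rw [e14, u1, u4, w1, w4] at this
    have : D * (2 - c + E / 4) = 0 := by
      linear_combination this + E / 4 * hD
    rcases mul_eq_zero.1 this with h | h
    · exact h
    · linarith
  have hpar : a * y - b * x = 0 := by
    rw [hDD] at hDsq
    exact mul_self_eq_zero.1 hDsq.symm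
  have hEp : 0 < E := by
    rcases hE0.lt_or_eq with h | h
    · exact h
    · rw [hDD, ← h] at hD; linarith
  obtain ⟨P, hP⟩ : ∃ P, P = g i1 * a - f i1 * b := ⟨_, rfl⟩
  obtain ⟨Q, hQ⟩ : ∃ Q, Q = g i2 * a - f i2 * b := ⟨_, rfl⟩
  have hP4 : g i4 * a - f i4 * b = P := by rw [hP, ha, hb]; ring
  have hQ3 : g i3 * a - f i3 * b = Q := by
    rw [hQ]; rw [hx, hy] at hpar; linear_combination -hpar
  have idn : ∀ i j, E * (f i * f j + g i * g j) = (f i * a + g i * b) * (f j * a + g j * b)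
      + (g i * a - f i * b) * (g j * a - f j * b) := by
    intro i j; rw [hE]; ring
  have kP : P * P = E * (2 - c) + E * E / 4 := by
    have := idn i1 i4
    rw [e14, u1, u4, hP4, ← hP] at this
    linarith
  have kQ : Q * Q = 1 + E * (1 - c) := by
    have := idn i2 i3
    rw [e23, u2, u3, hQ3, ← hQ] at this
    linarith
  have kPQ : P * Q = E * (3 / 2 - c) := by
    have := idn i1 i2
    rw [e12, u1, u2, ← hP, ← hQ] at this
    linarith
  have key : ∀ i, i ∈ Finset.univ \ ({i1, i2, i3, i4} : Finset (Fin n)) →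
      ∃ d1 d2 d3 d4 : ℤ, (d1 = 1 ∨ d1 = 2) ∧ (d2 = 1 ∨ d2 = 2) ∧ (d3 = 1 ∨ d3 = 2) ∧
      (d4 = 1 ∨ d4 = 2) ∧ f i * a + g i * b = d1 - d4 ∧ E * (d2 - d3) = -2 * (d1 - d4) ∧
      E * (d1 - c) = E / 2 * (d1 - d4) + P * (g i * a - f i * b) ∧
      E * (d2 - c) = - (d1 - d4) + Q * (g i * a - f i * b) := by
    intro i hi
    simp only [Finset.mem_sdiff, Finset.mem_univ, true_and, Finset.mem_insert,
      Finset.mem_singleton, not_or] at hi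
    obtain ⟨m1, m2, m3, m4⟩ := hi
    have f1 := hd _ _ m1
    have f2 := hd _ _ m2
    have f3 := hd _ _ m3
    have f4 := hd _ _ m4
    have o1 := hdiam _ _ m1
    have o2 := hdiam _ _ m2
    have o3 := hdiam _ _ m3
    have o4 := hdiam _ _ m4
    have g1 : f i * a + g i * b = (G.dist i i1 : ℝ) - (G.dist i i4 : ℝ) := by
      rw [ha, hb]; linarith
    have r1 := idn i i1
    have r2 := idn i i2
    have r3 := idn i i3
    rw [f1, u1, ← hP, g1] at r1
    rw [f2, u2, ← hQ, g1] at r2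
    rw [f3, u3, hQ3, g1] at r3
    refine ⟨G.dist i i1, G.dist i i2, G.dist i i3, G.dist i i4, by omega, by omega, by omega,
      by omega, ?_, ?_, ?_, ?_⟩ <;> push_cast <;> linarith
  by_cases hE2 : E = 2
  · subst hE2
    have hQ0 : Q = 0 := by
      have : Q * (Q - P) = 0 := by linarith
      rcases mul_eq_zero.1 this with h | h
      · exact h
      · have : Q = P := by linarith
        rw [this] at kQ; linarith
    have hc3 : c = 3 / 2 := by rw [hQ0] at kQ; linarith
    have hP0 : P ≠ 0 := by
      rintro rfl
      linarith
    have sums := sum_rest (fun i => g i * a + f i * (-b)) (sum_lin g f hg hf a (-b))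
      n12 n13 n14 n23 n24 n34
    have z : ∑ i ∈ Finset.univ \ {i1, i2, i3, i4}, (g i * a + f i * (-b)) = 0 := by
      apply Finset.sum_eq_zero
      intro i hi
      obtain ⟨d1, d2, d3, d4, o1, o2, o3, o4, t1, t2, t3, t4⟩ := key i hi
      rw [hQ0, hc3] at t4
      rw [hc3] at t3
      have a1 : d2 - d3 = - (d1 - d4) := by
        have : ((d2 - d3 : ℤ) : ℝ) = ((- (d1 - d4) : ℤ) : ℝ) := by push_cast; linarith
        exact_mod_cast this
      have a2 : d2 + d3 = 3 := by
        have : ((d2 + d3 : ℤ) : ℝ) = ((3 : ℤ) : ℝ) := by push_cast; linarith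
        exact_mod_cast this
      have a3 : d1 + d4 = 3 := by omega
      have a4 : (d1 : ℝ) + d4 = 3 := by exact_mod_cast a3
      have : P * (g i * a - f i * b) = 0 := by linarith
      rcases mul_eq_zero.1 this with h | h
      · exact absurd h hP0
      · linarith
    rw [z] at sums
    apply hP0
    simp only [hQ0] at hQ hQ3
    linarith
  · have key2 : ∀ i, i ∈ Finset.univ \ ({i1, i2, i3, i4} : Finset (Fin n)) →
      ∃ d1 d2 : ℤ, (d1 = 1 ∨ d1 = 2) ∧ (d2 = 1 ∨ d2 = 2) ∧ f i * a + g i * b = 0 ∧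
      P * (g i * a - f i * b) = E * (d1 - c) ∧ Q * (g i * a - f i * b) = E * (d2 - c) := by
      intro i hi
      obtain ⟨d1, d2, d3, d4, o1, o2, o3, o4, t1, t2, t3, t4⟩ := key i hi
      have hz : (d1 : ℝ) - d4 = 0 := by
        rcases o2 with rfl | rfl <;> rcases o3 with rfl | rfl <;> rcases o1 with rfl | rfl <;>
          rcases o4 with rfl | rfl <;> push_cast at t2 ⊢ <;>
          first
          | linarith
          | (exfalso; exact hE2 (by linarith))
      rw [hz] at t1 t3 t4
      exact ⟨d1, d2, o1, o2, t1, by linarith, by linarith⟩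
    have hcard : 1 < (Finset.univ \ ({i1, i2, i3, i4} : Finset (Fin n))).card := by
      rw [card_rest n12 n13 n14 n23 n24 n34]; omega
    obtain ⟨i, hi, j, hj, hij⟩ := Finset.one_lt_card.1 hcard
    obtain ⟨d1, d2, o1, o2, t, t1, t2⟩ := key2 i hi
    obtain ⟨d1', d2', o1', o2', t', t1', t2'⟩ := key2 j hj
    have := idn i j
    rw [hd i j hij, t, t'] at this
    have o := hdiam i j hij
    exact eq_typeA hEp hE2 hc hc2 kP kQ kPQ o1 o2 o1' o2' (d := G.dist i j) (by omega)
      t1 t2 t1' t2' (by push_cast; linarith)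

lemma no_P4 {n : ℕ} (hn : 6 ≤ n) (G : SimpleGraph (Fin n)) (hG : G.Connected)
    (hdiam : ∀ i j, i ≠ j → G.dist i j = 1 ∨ G.dist i j = 2)
    (f g : Fin n → ℝ) (hf : ∑ i, f i = 0) (hg : ∑ i, g i = 0) {c : ℝ} (hc : 1 < c) (hc2 : c < 2)
    (hd : ∀ i j, i ≠ j → f i * f j + g i * g j = G.dist i j - c)
    {i1 i2 i3 i4 : Fin n} (d12 : G.dist i1 i2 = 1) (d23 : G.dist i2 i3 = 1)
    (d34 : G.dist i3 i4 = 1) (d13 : G.dist i1 i3 = 2) (d24 : G.dist i2 i4 = 2)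
    (d14 : G.dist i1 i4 = 2) : False := by
  rcases lt_trichotomy (f i4 * f i4 + g i4 * g i4) (f i1 * f i1 + g i1 * g i1) with h | h | h
  · exact no_P4_pos hn G hG hdiam f g hf hg hc hc2 hd d12 d23 d34 d13 d24 d14 h
  · exact no_P4_eq hn G hdiam f g hf hg hc hc2 hd d12 d23 d34 d13 d24 d14 h
  · rw [G.dist_comm] at d12 d23 d34 d13 d24 d14
    exact no_P4_pos hn G hG hdiam f g hf hg hc hc2 hd d34 d23 d12 d24 d13 d14 h

lemma DL_symm {n : ℕ} (G : SimpleGraph (Fin n)) : (distLaplacian G).IsSymm := by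
  ext i j
  by_cases h : i = j
  · subst h; rfl
  · simp [distLaplacian, h, Ne.symm h, G.dist_comm]

lemma DL_off {n : ℕ} (G : SimpleGraph (Fin n)) {i j : Fin n} (h : i ≠ j) :
    distLaplacian G i j = -(G.dist i j : ℝ) := by
  simp [distLaplacian, h]

lemma DL_diag {n : ℕ} (G : SimpleGraph (Fin n)) (i : Fin n) :
    distLaplacian G i i = ∑ k, (G.dist i k : ℝ) := by
  simp [distLaplacian]

lemma DL_mulVec {n : ℕ} (G : SimpleGraph (Fin n)) (x : Fin n → ℝ) (i : Fin n) :
    (distLaplacian G *ᵥ x) i = ∑ j, (G.dist i j : ℝ) * (x i - x j) := by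
  have h : ∀ j, distLaplacian G i j * x j
      = (if i = j then (∑ k, (G.dist i k : ℝ)) * x i else 0) - (G.dist i j : ℝ) * x j := by
    intro j
    by_cases h : i = j
    · subst h; simp [DL_diag]
    · simp [DL_off G h, h]
  rw [Matrix.mulVec, dotProduct, Finset.sum_congr rfl (fun j _ => h j), Finset.sum_sub_distrib,
    Finset.sum_ite_eq, if_pos (Finset.mem_univ _), Finset.sum_mul, ← Finset.sum_sub_distrib]
  exact Finset.sum_congr rfl (fun j _ => by ring)

lemma DL_one {n : ℕ} (G : SimpleGraph (Fin n)) :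
    distLaplacian G *ᵥ (fun _ => 1) = (0 : ℝ) • (fun _ => 1) := by
  ext i
  rw [DL_mulVec]; simp

lemma DL_ker {n : ℕ} (G : SimpleGraph (Fin n)) (hG : G.Connected)
    (x : Fin n → ℝ) (hx : distLaplacian G *ᵥ x = (0 : ℝ) • x) : ∃ r : ℝ, x = r • (fun _ => (1:ℝ)) := by
  have : Nonempty (Fin n) := hG.nonempty
  obtain ⟨i, hi⟩ := Finite.exists_max x
  refine ⟨x i, ?_⟩
  have h := congrFun hx i
  rw [DL_mulVec, zero_smul] at h
  have h0 := (Finset.sum_eq_zero_iff_of_nonneg (fun j _ =>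
    mul_nonneg (Nat.cast_nonneg (G.dist i j)) (sub_nonneg.2 (hi j)))).1 h
  ext j
  by_cases hij : i = j
  · subst hij; simp
  · rcases mul_eq_zero.1 (h0 j (Finset.mem_univ _)) with h | h
    · have := hG.pos_dist_of_ne hij
      have h : G.dist i j = 0 := by exact_mod_cast h
      omega
    · simp; linarith

lemma eigMult_zero_le {n : ℕ} (G : SimpleGraph (Fin n)) (hG : G.Connected) :
    eigMult (distLaplacian G) 0 ≤ 1 := by
  unfold eigMult
  have hle : Module.End.eigenspace (distLaplacian G).mulVecLin 0
      ≤ Submodule.span ℝ {fun _ : Fin n => (1 : ℝ)} := by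
    intro x hx
    rw [Module.End.mem_eigenspace_iff, Matrix.mulVecLin_apply] at hx
    obtain ⟨r, hr⟩ := DL_ker G hG x hx
    rw [hr]
    exact Submodule.smul_mem _ _ (Submodule.mem_span_singleton_self _)
  calc _ ≤ Module.finrank ℝ (Submodule.span ℝ {fun _ : Fin n => (1 : ℝ)}) :=
        Submodule.finrank_mono hle
    _ ≤ 1 := by
        have := finrank_span_le_card (R := ℝ) ({fun _ : Fin n => (1 : ℝ)} : Set (Fin n → ℝ))
        simpa using this

lemma eig_vec {n : ℕ} {M : Matrix (Fin n) (Fin n) ℝ} {a : ℝ}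
    (h : Module.End.HasEigenvalue M.mulVecLin a) : ∃ u : Fin n → ℝ, M *ᵥ u = a • u ∧ u ⬝ᵥ u ≠ 0 := by
  obtain ⟨u, hu⟩ := h.exists_hasEigenvector
  refine ⟨u, ?_, ?_⟩
  · have := hu.apply_eq_smul
    rwa [Matrix.mulVecLin_apply] at this
  · intro h0
    exact hu.2 (dotProduct_self_eq_zero.1 h0)

lemma eig_of_vec {n : ℕ} {M : Matrix (Fin n) (Fin n) ℝ} {a : ℝ} {u : Fin n → ℝ}
    (h : M *ᵥ u = a • u) (h0 : u ≠ 0) : Module.End.HasEigenvalue M.mulVecLin a := by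
  apply Module.End.hasEigenvalue_of_hasEigenvector (x := u)
  refine ⟨?_, h0⟩
  rw [Module.End.mem_eigenspace_iff, Matrix.mulVecLin_apply, h]

lemma fwd_setup {n : ℕ} (hn : 6 ≤ n) (G : SimpleGraph (Fin n)) (hG : G.Connected)
    (h4 : {μ : ℝ | Module.End.HasEigenvalue (distLaplacian G).mulVecLin μ}.ncard = 4)
    (hl : eigMult (distLaplacian G) (lambdaMax (distLaplacian G)) = n - 3) :
    ∃ l a b : ℝ, 0 < l ∧ a < l ∧ b < l ∧ a ≠ 0 ∧ b ≠ 0 ∧ a ≠ b ∧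
      eigMult (distLaplacian G) l = n - 3 ∧
      Module.End.HasEigenvalue (distLaplacian G).mulVecLin l ∧
      Module.End.HasEigenvalue (distLaplacian G).mulVecLin a ∧
      Module.End.HasEigenvalue (distLaplacian G).mulVecLin b ∧
      ∀ μ, Module.End.HasEigenvalue (distLaplacian G).mulVecLin μ →
        μ = 0 ∨ μ = l ∨ μ = a ∨ μ = b := by
  obtain ⟨S, hS⟩ : ∃ S, S = {μ : ℝ | Module.End.HasEigenvalue (distLaplacian G).mulVecLin μ} :=
    ⟨_, rfl⟩
  have mem : ∀ μ, μ ∈ S ↔ Module.End.HasEigenvalue (distLaplacian G).mulVecLin μ := by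
    intro μ; rw [hS]; rfl
  unfold lambdaMax at hl
  rw [← hS] at h4 hl
  have hfin : S.Finite := Set.finite_of_ncard_ne_zero (by omega)
  have hne : S.Nonempty := Set.nonempty_of_ncard_ne_zero (by omega)
  have hmem : sSup S ∈ S := hne.csSup_mem hfin
  have hle : ∀ μ ∈ S, μ ≤ sSup S := fun μ h => le_csSup hfin.bddAbove h
  generalize sSup S = l at *
  have h0 : (0 : ℝ) ∈ S := by
    rw [mem]
    apply eig_of_vec (DL_one G)
    intro h
    have := congrFun h ⟨0, by omega⟩
    simp at this
  have hl0 : l ≠ 0 := by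
    rintro rfl
    have := eigMult_zero_le G hG
    omega
  have h2 : (S \ {0, l}).ncard = 2 := by
    rw [Set.ncard_sdiff (by
      intro x hx
      rcases hx with rfl | rfl
      · exact h0
      · exact hmem), h4, Set.ncard_pair hl0.symm]
  obtain ⟨a, b, hab, hab2⟩ := Set.ncard_eq_two.1 h2
  have ha : a ∈ S \ {0, l} := by rw [hab2]; simp
  have hb : b ∈ S \ {0, l} := by rw [hab2]; simp
  simp only [Set.mem_sdiff, Set.mem_insert_iff, Set.mem_singleton_iff, not_or] at ha hb
  refine ⟨l, a, b, lt_of_le_of_ne (hle _ h0) hl0.symm, lt_of_le_of_ne (hle _ ha.1) ha.2.2,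
    lt_of_le_of_ne (hle _ hb.1) hb.2.2, ha.2.1, hb.2.1, hab, hl, (mem _).1 hmem, (mem _).1 ha.1,
    (mem _).1 hb.1, ?_⟩
  intro μ hμ
  by_contra hcon
  have : μ ∈ S \ {0, l} := by
    refine ⟨(mem _).2 hμ, ?_⟩
    rintro (h | h) <;> tauto
  rw [hab2] at this
  rcases this with h | h
  · tauto
  · have : μ = b := h
    tauto

lemma sum_zero_of_eig {n : ℕ} (G : SimpleGraph (Fin n)) {a : ℝ} (ha : a ≠ 0) {u : Fin n → ℝ}
    (hu : distLaplacian G *ᵥ u = a • u) : ∑ i, u i = 0 := by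
  have := eig_orth (distLaplacian G) (DL_symm G) ha.symm (DL_one G) hu
  simpa [dotProduct] using this

lemma entries {n : ℕ} (G : SimpleGraph (Fin n))
    {l a b : ℝ} (hl0 : l ≠ 0) (hal : l ≠ a) (hbl : l ≠ b) (ha : a ≠ 0) (hb : b ≠ 0)
    (hab : a ≠ b) (hl : eigMult (distLaplacian G) l = n - 3) {u v : Fin n → ℝ}
    (hn : 0 < n)
    (hu : distLaplacian G *ᵥ u = a • u) (hv : distLaplacian G *ᵥ v = b • v)
    (hu0 : u ⬝ᵥ u ≠ 0) (hv0 : v ⬝ᵥ v ≠ 0) :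
    (∀ i j, i ≠ j → (G.dist i j : ℝ) = l / n + (l - a) / (u ⬝ᵥ u) * u i * u j
      + (l - b) / (v ⬝ᵥ v) * v i * v j) ∧
    (∀ i, ∑ k, (G.dist i k : ℝ) = l - l / n - (l - a) / (u ⬝ᵥ u) * u i * u i
      - (l - b) / (v ⬝ᵥ v) * v i * v i) := by
  have hone : (fun _ : Fin n => (1 : ℝ)) ⬝ᵥ (fun _ => 1) = n := by simp [dotProduct]
  have hn0 : (n : ℝ) ≠ 0 := by positivity
  have key := decomp (distLaplacian G) (DL_symm G) hl0 hal hbl ha.symm hb.symm hab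
    (DL_one G) hu hv (by rw [hone]; exact hn0) hu0 hv0 hl
  simp only [hone, sub_zero, mul_one] at key
  constructor
  · intro i j hij
    have := key i j
    rw [DL_off G hij, if_neg hij] at this
    linarith
  · intro i
    have := key i i
    rw [DL_diag, if_pos rfl] at this
    linarith

lemma trans_ge {n : ℕ} (G : SimpleGraph (Fin n)) (hG : G.Connected) (i : Fin n) :
    (n : ℝ) - 1 ≤ ∑ k, (G.dist i k : ℝ) := by
  have h : ∀ k, (1 : ℝ) - (if i = k then 1 else 0) ≤ G.dist i k := by
    intro k
    by_cases hk : i = k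
    · subst hk; simp
    · have := hG.pos_dist_of_ne hk
      simp [hk]; exact_mod_cast this
  have := Finset.sum_le_sum (fun k (_ : k ∈ Finset.univ) => h k)
  simpa [Finset.sum_sub_distrib] using this

lemma dotself_pos {n : ℕ} {u : Fin n → ℝ} (h : u ⬝ᵥ u ≠ 0) : 0 < u ⬝ᵥ u :=
  lt_of_le_of_ne (Finset.sum_nonneg (fun i _ => mul_self_nonneg (u i))) h.symm

lemma l_gt {n : ℕ} (hn : 6 ≤ n) (G : SimpleGraph (Fin n)) (hG : G.Connected)
    {l a b : ℝ} (hal : a < l) (hbl : b < l) {u v : Fin n → ℝ}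
    (hu0 : u ⬝ᵥ u ≠ 0) (hv0 : v ⬝ᵥ v ≠ 0)
    (hdiag : ∀ i, ∑ k, (G.dist i k : ℝ) = l - l / n - (l - a) / (u ⬝ᵥ u) * u i * u i
      - (l - b) / (v ⬝ᵥ v) * v i * v i) : (n : ℝ) < l := by
  have hu := dotself_pos hu0
  have hv := dotself_pos hv0
  obtain ⟨i, hi⟩ : ∃ i, u i ≠ 0 := by
    by_contra h
    push Not at h
    apply hu0
    simp [dotProduct, h]
  have h1 := hdiag i
  have h2 := trans_ge G hG i
  have h3 : 0 < (l - a) / (u ⬝ᵥ u) * (u i * u i) :=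
    mul_pos (div_pos (sub_pos.2 hal) hu) (mul_self_pos.2 hi)
  have h4 : 0 ≤ (l - b) / (v ⬝ᵥ v) * (v i * v i) :=
    mul_nonneg (div_pos (sub_pos.2 hbl) hv).le (mul_self_nonneg _)
  have hn0 : (6 : ℝ) ≤ n := by exact_mod_cast hn
  have h5 : (n : ℝ) - 1 < l - l / n := by
    rw [h1] at h2; linarith
  have h6 : l - l / n = (n - 1) * (l / n) := by field_simp
  rw [h6] at h5
  have h7 : 1 < l / n := by
    by_contra h
    have := mul_le_mul_of_nonneg_left (not_lt.1 h) (by linarith : (0 : ℝ) ≤ n - 1)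
    linarith
  rwa [lt_div_iff₀ (by linarith), one_mul] at h7

lemma l_lt {n : ℕ} (hn : 6 ≤ n) (G : SimpleGraph (Fin n)) (hG : G.Connected)
    (hdiam : ∀ i j, i ≠ j → G.dist i j = 1 ∨ G.dist i j = 2) {l : ℝ} (hl : l ≠ 0)
    (h : Module.End.HasEigenvalue (distLaplacian G).mulVecLin l) : l < 2 * n := by
  obtain ⟨z, hz, hz0⟩ := eig_vec h
  have hs := sum_zero_of_eig G hl hz
  have : Nonempty (Fin n) := hG.nonempty
  obtain ⟨m, hm⟩ := Finite.exists_max z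
  by_contra hcon
  have hcon := not_lt.1 hcon
  have hzm : 0 ≤ z m := by
    by_contra hneg
    have : ∑ i, z i ≤ ∑ _i : Fin n, z m := Finset.sum_le_sum (fun i _ => hm i)
    rw [hs] at this
    simp at this
    have : 0 < (n : ℝ) := by positivity
    nlinarith
  have step : ∀ i j, z i = z m → G.Adj i j → z j = z m := by
    intro i j hi hij
    have e := congrFun hz i
    rw [DL_mulVec, Pi.smul_apply, smul_eq_mul] at e
    have e2 : ∑ j, (2 - (G.dist i j : ℝ)) * (z i - z j) = (2 * n - l) * z i := by
      have : ∑ j, (2 - (G.dist i j : ℝ)) * (z i - z j)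
          = ∑ j, (2 * z i - 2 * z j - (G.dist i j : ℝ) * (z i - z j)) :=
        Finset.sum_congr rfl (fun j _ => by ring)
      rw [this, Finset.sum_sub_distrib, e, Finset.sum_sub_distrib, ← Finset.mul_sum, ← Finset.mul_sum, hs]
      simp; ring
    have nn : ∀ j ∈ Finset.univ, 0 ≤ (2 - (G.dist i j : ℝ)) * (z i - z j) := by
      intro j _
      apply mul_nonneg _ (by rw [hi]; exact sub_nonneg.2 (hm j))
      by_cases hij : i = j
      · subst hij; simp
      · rcases hdiam i j hij with h | h <;> rw [h] <;> norm_num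
    have e3 : ∑ j, (2 - (G.dist i j : ℝ)) * (z i - z j) = 0 := by
      apply le_antisymm _ (Finset.sum_nonneg nn)
      rw [e2, hi]
      exact mul_nonpos_of_nonpos_of_nonneg (by linarith) hzm
    have := (Finset.sum_eq_zero_iff_of_nonneg nn).1 e3 j (Finset.mem_univ _)
    rw [SimpleGraph.dist_eq_one_iff_adj.2 hij] at this
    push_cast at this
    linarith
  have all : ∀ i, z i = z m := by
    intro i
    by_contra hi
    obtain ⟨p⟩ := hG.preconnected m i
    obtain ⟨d, -, hd1, hd2⟩ := p.exists_boundary_dart {i | z i = z m} rfl hi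
    exact hd2 (step _ _ hd1 d.adj)
  apply hz0
  have : z m = 0 := by
    rw [Finset.sum_congr rfl (fun i _ => all i)] at hs
    simp at hs
    rcases hs with h | h
    · omega
    · exact h
  simp [dotProduct, all, this]

lemma dist_step {V : Type*} (G : SimpleGraph V) (hG : G.Connected) {u v : V} {k : ℕ}
    (h : G.dist u v = k + 1) : ∃ w, G.Adj u w ∧ G.dist w v = k := by
  obtain ⟨p, hp⟩ := hG.exists_walk_length_eq_dist u v
  cases p with
  | nil => simp at h
  | cons hadj q =>
    rename_i w
    refine ⟨w, hadj, ?_⟩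
    have h1 := SimpleGraph.dist_le q
    have h2 := hG.dist_triangle (u := u) (v := w) (w := v)
    rw [SimpleGraph.dist_eq_one_iff_adj.2 hadj] at h2
    rw [SimpleGraph.Walk.length_cons] at hp
    omega

lemma diam_two {n : ℕ} (hn : 6 ≤ n) (G : SimpleGraph (Fin n)) (hG : G.Connected)
    (f g : Fin n → ℝ) (hf : ∑ i, f i = 0) (hg : ∑ i, g i = 0) {c : ℝ} (hc : 1 < c)
    (hd : ∀ i j, i ≠ j → f i * f j + g i * g j = G.dist i j - c) :
    ∀ i j, i ≠ j → G.dist i j = 1 ∨ G.dist i j = 2 := by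
  have three : ∀ i j, G.dist i j ≠ 3 := by
    intro i1 i4 h
    obtain ⟨i2, h12, h24⟩ := dist_step G hG (k := 2) h
    obtain ⟨i3, h23, h34⟩ := dist_step G hG (k := 1) h24
    have d12 := SimpleGraph.dist_eq_one_iff_adj.2 h12
    have d23 := SimpleGraph.dist_eq_one_iff_adj.2 h23
    have t1 := hG.dist_triangle (u := i1) (v := i2) (w := i3)
    have t2 := hG.dist_triangle (u := i1) (v := i3) (w := i4)
    exact no_dist_three hn G hG f g hf hg hc hd d12 d23 h34 (by omega) h24 h
  have big : ∀ m i j, G.dist i j ≠ 3 + m := by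
    intro m
    induction m with
    | zero => exact three
    | succ m ih =>
      intro i j h
      obtain ⟨w, -, hw⟩ := dist_step G hG (k := 3 + m) h
      exact ih _ _ hw
  intro i j hij
  have h1 := hG.pos_dist_of_ne hij
  have h2 := big (G.dist i j - 3) i j
  omega

def P4free {V : Type*} (G : SimpleGraph V) : Prop :=
  ∀ a b c d, G.Adj a b → G.Adj b c → G.Adj c d → a ≠ c → b ≠ d → a ≠ d →
    ¬ G.Adj a c → ¬ G.Adj b d → ¬ G.Adj a d → False

lemma P4free.compl {V : Type*} {G : SimpleGraph V} (h : P4free G) : P4free Gᶜ := by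
  intro a b c d h1 h2 h3 n1 n2 n3 m1 m2 m3
  simp only [SimpleGraph.compl_adj, not_and, not_not] at *
  exact h c a d b (m1 n1).symm (m3 n3) (m2 n2).symm h3.1 h1.1 h2.1.symm h3.2 h1.2
    (fun h => h2.2 h.symm)

def Cross {V : Type*} (G : SimpleGraph V) (A B : Finset V) : Prop :=
  ∀ x ∈ A, ∀ y ∈ B, G.Adj x y

def Split {V : Type*} [DecidableEq V] (G : SimpleGraph V) (S : Finset V) : Prop :=
  ∃ A B : Finset V, A.Nonempty ∧ B.Nonempty ∧ A ∪ B = S ∧ (Cross G A B ∨ Cross Gᶜ A B)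

lemma Cross.symm {V : Type*} {G : SimpleGraph V} {A B : Finset V} (h : Cross G A B) :
    Cross G B A := fun x hx y hy => (h y hy x hx).symm

lemma Split.of_compl {V : Type*} [DecidableEq V] {G : SimpleGraph V} {S : Finset V}
    (h : Split Gᶜ S) : Split G S := by
  obtain ⟨A, B, h1, h2, h3, h4⟩ := h
  rw [compl_compl] at h4
  exact ⟨A, B, h1, h2, h3, h4.symm⟩

open Classical in
lemma split_step_aux {V : Type*} {G : SimpleGraph V} (hP : P4free G) {A B : Finset V}
    {v : V} (hv : v ∉ A ∪ B) (hc : Cross Gᶜ A B)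
    {w z : V} (hw : w ∈ A) (hvw : ¬ G.Adj v w) (hz : z ∈ B) (hvz : G.Adj v z) :
    Split G (insert v (A ∪ B)) := by
  refine ⟨A.filter (fun x => ¬ G.Adj v x), insert v (A.filter (fun x => G.Adj v x) ∪ B),
    ⟨w, by simp [hw, hvw]⟩, ⟨v, by simp⟩, ?_, Or.inr ?_⟩
  · ext x
    simp only [Finset.mem_union, Finset.mem_filter, Finset.mem_insert]
    tauto
  · intro x hx y hy
    simp only [Finset.mem_union, Finset.mem_filter, Finset.mem_insert] at hx hy hv
    have hxv : x ≠ v := by rintro rfl; exact hv (Or.inl hx.1)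
    rcases hy with rfl | ⟨hy, hvy⟩ | hy
    · rw [SimpleGraph.compl_adj]
      exact ⟨hxv, fun h => hx.2 h.symm⟩
    · rw [SimpleGraph.compl_adj]
      refine ⟨by rintro rfl; exact hx.2 hvy, ?_⟩
      intro hxy
      have c1 := hc x hx.1 z hz
      have c2 := hc y hy z hz
      rw [SimpleGraph.compl_adj] at c1 c2
      exact hP x y v z hxy hvy.symm hvz hxv c2.1 c1.1 (fun h => hx.2 h.symm) c2.2 c1.2
    · exact hc x hx.1 y hy

open Classical in
lemma split_step {V : Type*} {G : SimpleGraph V} (hP : P4free G) {A B : Finset V}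
    (hA : A.Nonempty) (hB : B.Nonempty)
    {v : V} (hv : v ∉ A ∪ B) (hc : Cross Gᶜ A B) :
    Split G (insert v (A ∪ B)) := by
  have hv' := hv
  simp only [Finset.mem_union, not_or] at hv'
  by_cases h1 : ∀ x ∈ A, ¬ G.Adj v x
  · refine ⟨A, insert v B, hA, ⟨v, by simp⟩, ?_, Or.inr ?_⟩
    · ext x; simp only [Finset.mem_union, Finset.mem_insert]; tauto
    · intro x hx y hy
      rcases Finset.mem_insert.1 hy with rfl | hy
      · rw [SimpleGraph.compl_adj]
        exact ⟨by rintro rfl; exact hv'.1 hx, fun h => h1 x hx h.symm⟩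
      · exact hc x hx y hy
  by_cases h2 : ∀ x ∈ B, ¬ G.Adj v x
  · refine ⟨insert v A, B, ⟨v, by simp⟩, hB, ?_, Or.inr ?_⟩
    · ext x; simp only [Finset.mem_union, Finset.mem_insert]; tauto
    · intro x hx y hy
      rcases Finset.mem_insert.1 hx with rfl | hx
      · rw [SimpleGraph.compl_adj]
        exact ⟨by rintro rfl; exact hv'.2 hy, fun h => h2 y hy h⟩
      · exact hc x hx y hy
  push Not at h1 h2
  obtain ⟨x, hx, hvx⟩ := h1
  obtain ⟨z, hz, hvz⟩ := h2
  by_cases h3 : ∀ w ∈ A ∪ B, G.Adj v w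
  · refine ⟨{v}, A ∪ B, by simp, ⟨x, by simp [hx]⟩, rfl, Or.inl ?_⟩
    intro y hy w hw
    rw [Finset.mem_singleton.1 hy]
    exact h3 w hw
  push Not at h3
  obtain ⟨w, hw, hvw⟩ := h3
  rcases Finset.mem_union.1 hw with hw | hw
  · exact split_step_aux hP hv hc hw hvw hz hvz
  · rw [Finset.union_comm] at hv ⊢
    exact split_step_aux hP hv hc.symm hw hvw hx hvx

open Classical in
lemma split_all {V : Type*} {G : SimpleGraph V} (hP : P4free G) (S : Finset V) :
    2 ≤ S.card → Split G S := by
  induction S using Finset.induction_on with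
  | empty => simp
  | insert v S hv ih =>
    intro h
    rw [Finset.card_insert_of_notMem hv] at h
    by_cases h2 : 2 ≤ S.card
    · obtain ⟨A, B, hA, hB, rfl, hc | hc⟩ := ih h2
      · apply Split.of_compl
        exact split_step hP.compl hA hB hv (by rwa [compl_compl])
      · exact split_step hP hA hB hv hc
    · obtain ⟨w, rfl⟩ := Finset.card_eq_one.1 (by omega : S.card = 1)
      refine ⟨{v}, {w}, by simp, by simp, rfl, ?_⟩
      have hvw : v ≠ w := by simpa using hv
      by_cases hadj : G.Adj v w
      · left; intro x hx y hy
        rw [Finset.mem_singleton.1 hx, Finset.mem_singleton.1 hy]; exact hadj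
      · right; intro x hx y hy
        rw [Finset.mem_singleton.1 hx, Finset.mem_singleton.1 hy, SimpleGraph.compl_adj]
        exact ⟨hvw, hadj⟩

lemma join_of_P4free {n : ℕ} (hn : 6 ≤ n) {G : SimpleGraph (Fin n)} (hG : G.Connected)
    (hP : P4free G) : ∃ A B : Finset (Fin n), A.Nonempty ∧ B.Nonempty ∧ A ∪ B = Finset.univ ∧
      Cross G A B := by
  have h : Split G Finset.univ := by
    have := split_all hP Finset.univ (by simp; omega)
    convert this
  obtain ⟨A, B, ⟨x, hx⟩, ⟨y, hy⟩, hU, hc | hc⟩ := h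
  · exact ⟨A, B, ⟨x, hx⟩, ⟨y, hy⟩, hU, hc⟩
  · exfalso
    obtain ⟨p⟩ := hG.preconnected x y
    have hyA : y ∉ A := by
      intro h
      have := hc y h y hy
      exact this.ne rfl
    obtain ⟨d, -, hd1, hd2⟩ := p.exists_boundary_dart {i | i ∈ A} hx hyA
    have : d.snd ∈ B := by
      have : d.snd ∈ A ∪ B := by rw [hU]; simp
      rcases Finset.mem_union.1 this with h | h
      · exact absurd h hd2
      · exact h
    have := hc _ hd1 _ this
    rw [SimpleGraph.compl_adj] at this
    exact this.2 d.adj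

lemma fwd_join {n : ℕ} (hn : 6 ≤ n) (G : SimpleGraph (Fin n)) (hG : G.Connected)
    {l a b : ℝ} (hl0 : 0 < l) (hal : a < l) (hbl : b < l) (ha : a ≠ 0) (hb : b ≠ 0)
    (hab : a ≠ b) (hl : eigMult (distLaplacian G) l = n - 3)
    (hle : Module.End.HasEigenvalue (distLaplacian G).mulVecLin l)
    (hae : Module.End.HasEigenvalue (distLaplacian G).mulVecLin a)
    (hbe : Module.End.HasEigenvalue (distLaplacian G).mulVecLin b) :
    (∀ i j, i ≠ j → G.dist i j = 1 ∨ G.dist i j = 2) ∧ n < l ∧ l < 2 * n ∧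
    ∃ A B : Finset (Fin n), A.Nonempty ∧ B.Nonempty ∧ A ∪ B = Finset.univ ∧
      Cross G A B := by
  obtain ⟨u, hu, hu0⟩ := eig_vec hae
  obtain ⟨v, hv, hv0⟩ := eig_vec hbe
  obtain ⟨hoff, hdiag⟩ := entries G hl0.ne' hal.ne' hbl.ne' ha hb hab hl (by omega) hu hv hu0 hv0
  have hln := l_gt hn G hG hal hbl hu0 hv0 hdiag
  have hnp : (0 : ℝ) < n := by positivity
  have hc : 1 < l / n := by rwa [lt_div_iff₀ hnp, one_mul]
  have ru : 0 ≤ (l - a) / (u ⬝ᵥ u) := (div_pos (sub_pos.2 hal) (dotself_pos hu0)).le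
  have rv : 0 ≤ (l - b) / (v ⬝ᵥ v) := (div_pos (sub_pos.2 hbl) (dotself_pos hv0)).le
  obtain ⟨f, hf⟩ : ∃ f : Fin n → ℝ, f = fun i => √((l - a) / (u ⬝ᵥ u)) * u i := ⟨_, rfl⟩
  obtain ⟨g, hg⟩ : ∃ g : Fin n → ℝ, g = fun i => √((l - b) / (v ⬝ᵥ v)) * v i := ⟨_, rfl⟩
  have sf : ∑ i, f i = 0 := by
    rw [hf, ← Finset.mul_sum, sum_zero_of_eig G ha hu, mul_zero]
  have sg : ∑ i, g i = 0 := by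
    rw [hg, ← Finset.mul_sum, sum_zero_of_eig G hb hv, mul_zero]
  have hd : ∀ i j, i ≠ j → f i * f j + g i * g j = G.dist i j - l / n := by
    intro i j hij
    rw [hoff i j hij, hf, hg]
    have e1 := Real.mul_self_sqrt ru
    have e2 := Real.mul_self_sqrt rv
    linear_combination (u i * u j) * e1 + (v i * v j) * e2
  have hdiam := diam_two hn G hG f g sf sg hc hd
  have hl2 := l_lt hn G hG hdiam hl0.ne' hle
  have hc2 : l / n < 2 := by rwa [div_lt_iff₀ hnp]
  refine ⟨hdiam, hln, hl2, join_of_P4free hn hG ?_⟩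
  have two : ∀ i j, i ≠ j → ¬ G.Adj i j → G.dist i j = 2 := by
    intro i j hij h
    rcases hdiam i j hij with h1 | h1
    · exact absurd (SimpleGraph.dist_eq_one_iff_adj.1 h1) h
    · exact h1
  intro i1 i2 i3 i4 h1 h2 h3 n1 n2 n3 m1 m2 m3
  exact no_P4 hn G hG hdiam f g sf sg hc hc2 hd (SimpleGraph.dist_eq_one_iff_adj.2 h1)
    (SimpleGraph.dist_eq_one_iff_adj.2 h2) (SimpleGraph.dist_eq_one_iff_adj.2 h3)
    (two _ _ n1 m1) (two _ _ n2 m2) (two _ _ n3 m3)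

/-- Adjacency rule of the three target graphs in terms of three colours. -/
def Rule (e : Prop) (i j : Fin 3) : Prop := (i = 0 ∧ j = 0 ∧ e) ∨ (i ≠ 2 ∧ j = 2) ∨ (i = 2 ∧ j ≠ 2)

def Col {V : Type*} [Fintype V] (G : SimpleGraph V) (e : Prop) (k0 k1 k2 : ℕ) : Prop :=
  ∃ c : V → Fin 3, (∀ x y, x ≠ y → (G.Adj x y ↔ Rule e (c x) (c y))) ∧
    (Finset.univ.filter (fun x => c x = 0)).card = k0 ∧
    (Finset.univ.filter (fun x => c x = 1)).card = k1 ∧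
    (Finset.univ.filter (fun x => c x = 2)).card = k2

lemma col_of_parts {n : ℕ} {G : SimpleGraph (Fin n)} {A B : Finset (Fin n)}
    (hU : A ∪ B = Finset.univ) (hc : Cross G A B)
    (hB : ∀ i ∈ B, ∀ j ∈ B, i ≠ j → ¬ G.Adj i j) {p q : Fin n} (hp : p ∈ A) (hq : q ∈ A)
    (hpq : p ≠ q) {e : Prop} (he : G.Adj p q ↔ e)
    (hA : ∀ i ∈ A, ∀ j ∈ A, i ≠ j → ¬ (i = p ∧ j = q) → ¬ (i = q ∧ j = p) → ¬ G.Adj i j) :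
    Col G e 2 (A.card - 2) B.card := by
  have hmem : ∀ x, x ∈ B ↔ x ∉ A := by
    intro x
    constructor
    · intro h1 h2
      exact (hc x h2 x h1).ne rfl
    · intro h
      have : x ∈ A ∪ B := by rw [hU]; simp
      rcases Finset.mem_union.1 this with h1 | h1
      · exact absurd h1 h
      · exact h1
  refine ⟨fun x => if x = p ∨ x = q then 0 else if x ∈ A then 1 else 2, ?_, ?_, ?_, ?_⟩
  · intro x y hxy
    by_cases hxA : x ∈ A
    · by_cases hyA : y ∈ A
      · by_cases hx : x = p ∨ x = q
        · by_cases hy : y = p ∨ y = q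
          · simp only [hx, hy, if_true, Rule]
            simp
            rcases hx with rfl | rfl <;> rcases hy with rfl | rfl
            · exact absurd rfl hxy
            · exact he
            · rw [G.adj_comm]; exact he
            · exact absurd rfl hxy
          · simp only [hx, hy, hyA, if_true, if_false, Rule]
            simp
            exact hA x hxA y hyA hxy (by tauto) (by tauto)
        · have : ¬ G.Adj x y := hA x hxA y hyA hxy (by tauto) (by tauto)
          simp only [hx, hxA, hyA, if_true, if_false, Rule, this]
          simp
          split_ifs <;> simp
      · have : G.Adj x y := hc x hxA y ((hmem y).2 hyA)
        have hy : ¬ (y = p ∨ y = q) := by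
          rintro (rfl | rfl)
          · exact hyA hp
          · exact hyA hq
        simp only [hy, hxA, hyA, if_true, if_false, Rule, this]
        simp
        split_ifs <;> simp
    · have hx : ¬ (x = p ∨ x = q) := by
          rintro (rfl | rfl)
          · exact hxA hp
          · exact hxA hq
      by_cases hyA : y ∈ A
      · have : G.Adj x y := (hc y hyA x ((hmem x).2 hxA)).symm
        simp only [hx, hxA, hyA, if_true, if_false, Rule, this]
        simp
        split_ifs <;> simp
      · have : ¬ G.Adj x y := hB x ((hmem x).2 hxA) y ((hmem y).2 hyA) hxy
        have hy : ¬ (y = p ∨ y = q) := by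
          rintro (rfl | rfl)
          · exact hyA hp
          · exact hyA hq
        simp only [hx, hy, hxA, hyA, if_false, Rule, this]
        simp
  · refine Eq.trans (congrArg Finset.card ?_) (Finset.card_pair hpq)
    ext x
    simp only [Finset.mem_filter, Finset.mem_univ, true_and, Finset.mem_insert,
      Finset.mem_singleton]
    split_ifs <;> simp_all
  · have hsub : ({p, q} : Finset (Fin n)) ⊆ A := by
      intro x hx
      rcases Finset.mem_insert.1 hx with rfl | hx
      · exact hp
      · rw [Finset.mem_singleton.1 hx]; exact hq
    have hsd := Finset.card_sdiff_of_subset hsub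
    rw [Finset.card_pair hpq] at hsd
    refine Eq.trans (congrArg Finset.card ?_) hsd
    ext x
    simp only [Finset.mem_filter, Finset.mem_univ, true_and, Finset.mem_insert,
      Finset.mem_singleton, Finset.mem_sdiff]
    split_ifs <;> simp_all
  · congr 1
    ext x
    simp only [Finset.mem_filter, Finset.mem_univ, true_and, hmem]
    split_ifs with h1 h2
    · rcases h1 with rfl | rfl <;> simp [hp, hq]
    · simp [h2]
    · simp [h2]

set_option maxHeartbeats 1000000 in
lemma core {n : ℕ} (hn : 6 ≤ n) {G : SimpleGraph (Fin n)}
    (hdiam : ∀ i j, i ≠ j → G.dist i j = 1 ∨ G.dist i j = 2) {A B : Finset (Fin n)}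
    (hU : A ∪ B = Finset.univ) (hc : Cross G A B) (hBn : B.Nonempty) {l κ : ℝ} (hln : n < l)
    (hκ : 0 < κ) {v : Fin n → ℝ} (hsum : ∑ i, v i = 0) (hv0 : v ⬝ᵥ v ≠ 0)
    (hvB : ∀ i ∈ B, v i = 0)
    (eA : ∀ i ∈ A, ∀ j ∈ A, i ≠ j → κ * (v i * v j) = G.dist i j - 1 - (l - n) / A.card)
    (eB : ∀ i ∈ B, ∀ j ∈ B, i ≠ j → κ * (v i * v j) = G.dist i j - 1 - (l - n) / B.card)
    (hcon : κ * (v ⬝ᵥ v) ≠ l - n) :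
    Col G False 2 0 (n - 2) ∨ (Even n ∧ Col G True 2 (n / 2 - 2) (n / 2)) ∨
      Col G True 2 (n - 3) 1 := by
  have hmem : ∀ x, x ∉ A → x ∈ B := by
    intro x h
    have : x ∈ A ∪ B := by rw [hU]; simp
    rcases Finset.mem_union.1 this with h1 | h1
    · exact absurd h1 h
    · exact h1
  have hdisj : Disjoint A B := by
    rw [Finset.disjoint_left]
    intro x h1 h2
    exact (hc x h1 x h2).ne rfl
  have hcard : A.card + B.card = n := by
    rw [← Finset.card_union_of_disjoint hdisj, hU]; simp
  have hBpos : 0 < B.card := hBn.card_pos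
  obtain ⟨p, hp⟩ : ∃ p, 0 < v p := by
    by_contra h
    push Not at h
    apply hv0
    have := (Finset.sum_eq_zero_iff_of_nonpos (fun i _ => h i)).1 hsum
    simp [dotProduct, this]
  obtain ⟨q, hq⟩ : ∃ p, v p < 0 := by
    by_contra h
    push Not at h
    apply hv0
    have := (Finset.sum_eq_zero_iff_of_nonneg (fun i _ => h i)).1 hsum
    simp [dotProduct, this]
  have hpA : p ∈ A := by
    by_contra h
    have := hvB p (hmem p h)
    linarith
  have hqA : q ∈ A := by
    by_contra h
    have := hvB q (hmem q h)
    linarith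
  have hpq : p ≠ q := by rintro rfl; linarith
  have hApos : 0 < A.card := Finset.card_pos.2 ⟨p, hpA⟩
  have hA2 : 2 ≤ A.card := by
    rw [← Finset.card_pair hpq]
    apply Finset.card_le_card
    intro x hx
    rcases Finset.mem_insert.1 hx with rfl | hx
    · exact hpA
    · rw [Finset.mem_singleton.1 hx]; exact hqA
  have sR : (0 : ℝ) < A.card := by exact_mod_cast hApos
  have tR : (0 : ℝ) < B.card := by exact_mod_cast hBpos
  have hτ : 0 < (l - n) / A.card := div_pos (by linarith) sR
  have hτ' : 0 < (l - n) / B.card := div_pos (by linarith) tR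
  have dR : ∀ i j, i ≠ j → (G.dist i j : ℝ) = 1 ∨ (G.dist i j : ℝ) = 2 := by
    intro i j hij
    rcases hdiam i j hij with h | h <;> rw [h]
    · left; norm_num
    · right; norm_num
  have adj1 : ∀ i j, G.Adj i j → (G.dist i j : ℝ) = 1 := by
    intro i j h
    rw [SimpleGraph.dist_eq_one_iff_adj.2 h]; norm_num
  have nadj2 : ∀ i j, (G.dist i j : ℝ) = 2 → ¬ G.Adj i j := by
    intro i j h h2
    rw [adj1 i j h2] at h; norm_num at h
  have hBd : ∀ i ∈ B, ∀ j ∈ B, i ≠ j → (G.dist i j : ℝ) = 2 ∧ (l - n) / B.card = 1 := by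
    intro i hi j hj hij
    have h := eB i hi j hj hij
    rw [hvB i hi] at h
    simp only [zero_mul, mul_zero] at h
    rcases dR i j hij with h1 | h1 <;> rw [h1] at h
    · linarith
    · exact ⟨h1, by linarith⟩
  have hBind : ∀ i ∈ B, ∀ j ∈ B, i ≠ j → ¬ G.Adj i j :=
    fun i hi j hj hij => nadj2 _ _ (hBd i hi j hj hij).1
  by_cases hz : ∃ r ∈ A, v r = 0
  · obtain ⟨r, hrA, hr⟩ := hz
    have hτ1 : (l - n) / A.card = 1 := by
      have hrp : r ≠ p := by rintro rfl; linarith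
      have h := eA r hrA p hpA hrp
      rw [hr] at h
      simp only [zero_mul, mul_zero] at h
      rcases dR r p hrp with h1 | h1 <;> rw [h1] at h <;> linarith
    have hadj : G.Adj p q := by
      have h := eA p hpA q hqA hpq
      rw [hτ1] at h
      have : κ * (v p * v q) < 0 := mul_neg_of_pos_of_neg hκ (mul_neg_of_pos_of_neg hp hq)
      rcases hdiam p q hpq with h1 | h1
      · exact SimpleGraph.dist_eq_one_iff_adj.1 h1
      · rw [h1] at h; push_cast at h; linarith
    have hrest : ∀ x ∈ A, x ≠ p → x ≠ q → v x = 0 := by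
      intro x hx h1 h2
      rcases lt_trichotomy (v x) 0 with h | h | h
      · have e := eA x hx q hqA h2
        have : 0 < κ * (v x * v q) := mul_pos hκ (mul_pos_of_neg_of_neg h hq)
        rcases dR x q h2 with h3 | h3 <;> rw [h3] at e <;> linarith
      · exact h
      · have e := eA x hx p hpA h1
        have : 0 < κ * (v x * v p) := mul_pos hκ (mul_pos h hp)
        rcases dR x p h1 with h3 | h3 <;> rw [h3] at e <;> linarith
    have hAind : ∀ i ∈ A, ∀ j ∈ A, i ≠ j → ¬ (i = p ∧ j = q) → ¬ (i = q ∧ j = p) →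
        ¬ G.Adj i j := by
      intro i hi j hj hij h1 h2
      apply nadj2
      have h := eA i hi j hj hij
      have h0 : v i * v j = 0 := by
        by_cases hip : i = p
        · rw [hrest j hj (by rintro rfl; exact hij hip) (by tauto), mul_zero]
        · by_cases hiq : i = q
          · rw [hrest j hj (by tauto) (by rintro rfl; exact hij hiq), mul_zero]
          · rw [hrest i hi hip hiq, zero_mul]
      rw [h0, hτ1] at h
      linarith
    have col := col_of_parts hU hc hBind hpA hqA hpq (e := True) (by simpa using hadj) hAind
    by_cases ht : B.card = 1
    · right; right
      rw [ht] at col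
      have : A.card - 2 = n - 3 := by omega
      rwa [this] at col
    · right; left
      obtain ⟨i, hi, j, hj, hij⟩ := Finset.one_lt_card.1 (by omega : 1 < B.card)
      have h1 := (hBd i hi j hj hij).2
      rw [div_eq_one_iff_eq tR.ne'] at h1
      rw [div_eq_one_iff_eq sR.ne', h1] at hτ1
      have h2 : B.card = A.card := by exact_mod_cast hτ1
      refine ⟨⟨A.card, by omega⟩, ?_⟩
      have h3 : A.card - 2 = n / 2 - 2 := by omega
      have h4 : B.card = n / 2 := by omega
      rwa [h3, h4] at col
  · push Not at hz
    by_cases hall : ∀ i ∈ A, ∀ j ∈ A, 0 < v i → v j < 0 → (G.dist i j : ℝ) = 1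
    · exfalso
      apply hcon
      have hne : ∀ {i j}, 0 < v i → v j < 0 → i ≠ j := by
        rintro i j h1 h2 rfl; linarith
      have e0 := eA p hpA q hqA hpq
      rw [hall p hpA q hqA hp hq] at e0
      have hpos : ∀ i ∈ A, 0 < v i → v i = v p := by
        intro i hi hvi
        have e := eA i hi q hqA (hne hvi hq)
        rw [hall i hi q hqA hvi hq] at e
        have : κ * v q * (v i - v p) = 0 := by linarith
        rcases mul_eq_zero.1 this with h | h
        · have := mul_neg_of_pos_of_neg hκ hq
          linarith
        · linarith
      have hneg : ∀ i ∈ A, v i < 0 → v i = v q := by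
        intro i hi hvi
        have e := eA p hpA i hi (hne hp hvi)
        rw [hall p hpA i hi hp hvi] at e
        have : κ * v p * (v i - v q) = 0 := by linarith
        rcases mul_eq_zero.1 this with h | h
        · have := mul_pos hκ hp
          linarith
        · linarith
      have hsq : ∀ i ∈ A, v i * v i = (v p + v q) * v i - v p * v q := by
        intro i hi
        rcases lt_trichotomy (v i) 0 with h | h | h
        · rw [hneg i hi h]; ring
        · exact absurd h (hz i hi)
        · rw [hpos i hi h]; ring
      have sA : ∀ w : Fin n → ℝ, (∀ i ∈ B, w i = 0) → ∑ i, w i = ∑ i ∈ A, w i := by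
        intro w hw
        rw [← hU, Finset.sum_union hdisj, Finset.sum_eq_zero hw, add_zero]
      have h1 : v ⬝ᵥ v = ∑ i ∈ A, v i * v i :=
        sA (fun i => v i * v i) (fun i hi => by simp [hvB i hi])
      rw [h1, Finset.sum_congr rfl hsq, Finset.sum_sub_distrib, ← Finset.mul_sum,
        ← sA v hvB, hsum]
      simp only [mul_zero, Finset.sum_const, nsmul_eq_mul, zero_sub]
      have : (l - n) / A.card * A.card = l - n := div_mul_cancel₀ _ sR.ne'
      rw [← this]
      linear_combination -(A.card : ℝ) * e0
    · push Not at hall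
      obtain ⟨i, hi, j, hj, hvi, hvj, hd⟩ := hall
      have hij : i ≠ j := by rintro rfl; linarith
      have hd2 : (G.dist i j : ℝ) = 2 := by
        rcases dR i j hij with h | h
        · exact absurd h hd
        · exact h
      have e := eA i hi j hj hij
      rw [hd2] at e
      have hτ1 : 1 < (l - n) / A.card := by
        have : κ * (v i * v j) < 0 := mul_neg_of_pos_of_neg hκ (mul_neg_of_pos_of_neg hvi hvj)
        linarith
      have noss : ∀ x ∈ A, ∀ y ∈ A, x ≠ y → ¬ 0 < v x * v y := by
        intro x hx y hy hxy h
        have e := eA x hx y hy hxy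
        have := mul_pos hκ h
        rcases dR x y hxy with h3 | h3 <;> rw [h3] at e <;> linarith
      have hAeq : A = {i, j} := by
        ext x
        simp only [Finset.mem_insert, Finset.mem_singleton]
        constructor
        · intro hx
          by_contra h
          push Not at h
          rcases lt_trichotomy (v x) 0 with h0 | h0 | h0
          · exact noss x hx j hj h.2 (mul_pos_of_neg_of_neg h0 hvj)
          · exact hz x hx h0
          · exact noss x hx i hi h.1 (mul_pos h0 hvi)
        · rintro (rfl | rfl) <;> assumption
      left
      have hs : A.card = 2 := by rw [hAeq, Finset.card_pair hij]
      have col := col_of_parts hU hc hBind hi hj hij (e := False)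
        (by simpa using nadj2 _ _ hd2) (by
          intro x hx y hy hxy h1 h2
          rw [hAeq] at hx hy
          simp only [Finset.mem_insert, Finset.mem_singleton] at hx hy
          exfalso
          rcases hx with rfl | rfl <;> rcases hy with rfl | rfl <;> tauto)
      have h3 : A.card - 2 = 0 := by omega
      have h4 : B.card = n - 2 := by omega
      rwa [h3, h4] at col

lemma join_eig {n : ℕ} {G : SimpleGraph (Fin n)} {A B : Finset (Fin n)}
    (hU : A ∪ B = Finset.univ) (hdisj : Disjoint A B) (hc : Cross G A B) :
    distLaplacian G *ᵥ (fun i => if i ∈ A then (B.card : ℝ) else -(A.card : ℝ))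
      = (n : ℝ) • (fun i => if i ∈ A then (B.card : ℝ) else -(A.card : ℝ)) := by
  have hcard : A.card + B.card = n := by
    rw [← Finset.card_union_of_disjoint hdisj, hU]; simp
  have hcR : (A.card : ℝ) + B.card = n := by exact_mod_cast hcard
  have hBA : ∀ x ∈ B, x ∉ A := fun x hx h => Finset.disjoint_left.1 hdisj h hx
  have adj1 : ∀ i j, G.Adj i j → (G.dist i j : ℝ) = 1 := by
    intro i j h
    rw [SimpleGraph.dist_eq_one_iff_adj.2 h]; norm_num
  ext i
  rw [DL_mulVec, Pi.smul_apply, smul_eq_mul, ← hU, Finset.sum_union hdisj]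
  have hi : i ∈ A ∪ B := by rw [hU]; simp
  rcases Finset.mem_union.1 hi with hi | hi
  · rw [Finset.sum_eq_zero (s := A) (by intro j hj; simp [hi, hj]),
      Finset.sum_congr (g := fun _ => (n : ℝ)) rfl (by
        intro j hj
        rw [adj1 i j (hc i hi j hj), if_pos hi, if_neg (hBA j hj)]; linarith)]
    simp [hi]; ring
  · rw [Finset.sum_eq_zero (s := B) (by intro j hj; simp [hBA i hi, hBA j hj]),
      Finset.sum_congr (g := fun _ => -(n : ℝ)) rfl (by
        intro j hj
        rw [adj1 i j (hc j hj i hi).symm, if_neg (hBA i hi), if_pos hj]; linarith)]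
    simp [hBA i hi]; ring

lemma join_col {n : ℕ} (hn : 6 ≤ n) {G : SimpleGraph (Fin n)}
    (hdiam : ∀ i j, i ≠ j → G.dist i j = 1 ∨ G.dist i j = 2) {A B : Finset (Fin n)}
    (hU : A ∪ B = Finset.univ) (hc : Cross G A B) (hA : A.Nonempty) (hB : B.Nonempty)
    {l b : ℝ} (hln : n < l) (hbl : b < l) (hb0 : b ≠ 0) (hbn : b ≠ n)
    (hl : eigMult (distLaplacian G) l = n - 3)
    (hbe : Module.End.HasEigenvalue (distLaplacian G).mulVecLin b) :
    Col G False 2 0 (n - 2) ∨ (Even n ∧ Col G True 2 (n / 2 - 2) (n / 2)) ∨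
      Col G True 2 (n - 3) 1 := by
  have hdisj : Disjoint A B := by
    rw [Finset.disjoint_left]
    intro x h1 h2
    exact (hc x h1 x h2).ne rfl
  have hcard : A.card + B.card = n := by
    rw [← Finset.card_union_of_disjoint hdisj, hU]; simp
  have hBA : ∀ x ∈ B, x ∉ A := fun x hx h => Finset.disjoint_left.1 hdisj h hx
  obtain ⟨v, hv, hv0⟩ := eig_vec hbe
  have hz := join_eig hU hdisj hc
  obtain ⟨z, hzd⟩ : ∃ z : Fin n → ℝ, z = fun i => if i ∈ A then (B.card : ℝ) else -(A.card : ℝ) :=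
    ⟨_, rfl⟩
  rw [← hzd] at hz
  obtain ⟨s, hs⟩ : ∃ s : ℝ, s = A.card := ⟨_, rfl⟩
  obtain ⟨t, ht⟩ : ∃ t : ℝ, t = B.card := ⟨_, rfl⟩
  have s0 : 0 < s := by rw [hs]; exact_mod_cast hA.card_pos
  have t0 : 0 < t := by rw [ht]; exact_mod_cast hB.card_pos
  have hst : s + t = n := by rw [hs, ht]; exact_mod_cast hcard
  have zA : ∀ i ∈ A, z i = t := by intro i hi; rw [hzd, ht]; simp [hi]
  have zB : ∀ i ∈ B, z i = -s := by intro i hi; rw [hzd, hs]; simp [hBA i hi]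
  have hzz : z ⬝ᵥ z = s * t * n := by
    rw [dotProduct, ← hU, Finset.sum_union hdisj,
      Finset.sum_congr (g := fun _ => t * t) rfl (fun i hi => by rw [zA i hi]),
      Finset.sum_congr (g := fun _ => s * s) (rfl : B = B) (fun i hi => by rw [zB i hi]; ring)]
    simp only [Finset.sum_const, nsmul_eq_mul, ← hs, ← ht]
    rw [← hst]; ring
  have n0 : (0 : ℝ) < n := by linarith
  have hzz0 : z ⬝ᵥ z ≠ 0 := by rw [hzz]; positivity
  obtain ⟨hoff, -⟩ := entries G (by linarith : l ≠ 0) hln.ne' hbl.ne' n0.ne' hb0 hbn.symm hl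
    (by omega) hz hv hzz0 hv0
  rw [hzz] at hoff
  obtain ⟨κ, hκd⟩ : ∃ κ, κ = (l - b) / (v ⬝ᵥ v) := ⟨_, rfl⟩
  rw [← hκd] at hoff
  have hκ : 0 < κ := by rw [hκd]; exact div_pos (sub_pos.2 hbl) (dotself_pos hv0)
  have hκv : κ * (v ⬝ᵥ v) ≠ l - n := by
    rw [hκd, div_mul_cancel₀ _ hv0]
    intro h
    apply hbn; linarith
  have hsum := sum_zero_of_eig G hb0 hv
  have eA : ∀ i ∈ A, ∀ j ∈ A, i ≠ j → κ * (v i * v j) = G.dist i j - 1 - (l - n) / A.card := by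
    intro i hi j hj hij
    rw [hoff i j hij, zA i hi, zA j hj, ← hs]
    have : l / n + (l - n) / (s * t * n) * t * t = 1 + (l - n) / s := by
      rw [← hst]; field_simp; ring
    linarith
  have eB : ∀ i ∈ B, ∀ j ∈ B, i ≠ j → κ * (v i * v j) = G.dist i j - 1 - (l - n) / B.card := by
    intro i hi j hj hij
    rw [hoff i j hij, zB i hi, zB j hj, ← ht]
    have : l / n + (l - n) / (s * t * n) * -s * -s = 1 + (l - n) / t := by
      rw [← hst]; field_simp; ring
    linarith
  have eC : ∀ i ∈ A, ∀ j ∈ B, v i * v j = 0 := by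
    intro i hi j hj
    have hadj := hc i hi j hj
    have h := hoff i j hadj.ne
    rw [zA i hi, zB j hj, SimpleGraph.dist_eq_one_iff_adj.2 hadj] at h
    have h2 : l / n + (l - n) / (s * t * n) * t * -s = 1 := by
      field_simp; ring
    have : κ * (v i * v j) = 0 := by push_cast at h; linarith
    rcases mul_eq_zero.1 this with h | h
    · exact absurd h hκ.ne'
    · exact h
  by_cases hvB : ∀ i ∈ B, v i = 0
  · exact core hn hdiam hU hc hB hln hκ hsum hv0 hvB eA eB hκv
  · push Not at hvB
    obtain ⟨j, hj, hvj⟩ := hvB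
    have hvA : ∀ i ∈ A, v i = 0 := by
      intro i hi
      rcases mul_eq_zero.1 (eC i hi j hj) with h | h
      · exact h
      · exact absurd h hvj
    exact core hn hdiam (by rw [Finset.union_comm]; exact hU) hc.symm hA hln hκ hsum hv0 hvA eB eA
      hκv

lemma forward_col {n : ℕ} (hn : 6 ≤ n) (G : SimpleGraph (Fin n)) (hG : G.Connected)
    (h4 : {μ : ℝ | Module.End.HasEigenvalue (distLaplacian G).mulVecLin μ}.ncard = 4)
    (hl : eigMult (distLaplacian G) (lambdaMax (distLaplacian G)) = n - 3) :
    Col G False 2 0 (n - 2) ∨ (Even n ∧ Col G True 2 (n / 2 - 2) (n / 2)) ∨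
      Col G True 2 (n - 3) 1 := by
  obtain ⟨l, a, b, hl0, hal, hbl, ha, hb, hab, hm, hle, hae, hbe, hall⟩ := fwd_setup hn G hG h4 hl
  obtain ⟨hdiam, hln, -, A, B, hA, hB, hU, hc⟩ :=
    fwd_join hn G hG hl0 hal hbl ha hb hab hm hle hae hbe
  have hdisj : Disjoint A B := by
    rw [Finset.disjoint_left]
    intro x h1 h2
    exact (hc x h1 x h2).ne rfl
  have hne : Module.End.HasEigenvalue (distLaplacian G).mulVecLin (n : ℝ) := by
    apply eig_of_vec (join_eig hU hdisj hc)
    obtain ⟨x, hx⟩ := hA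
    intro h
    have := congrFun h x
    simp [hx] at this
    exact hB.ne_empty this
  have n0 : (n : ℝ) ≠ 0 := by positivity
  rcases hall _ hne with h | h | h | h
  · exact absurd h n0
  · linarith
  · exact join_col hn hdiam hU hc hA hB hln hbl hb (by rw [h]; exact hab.symm) hm hbe
  · exact join_col hn hdiam hU hc hA hB hln hal ha (by rw [h]; exact hab) hm hae

lemma iso_of_col {V W : Type*} [Fintype V] [Fintype W] {G : SimpleGraph V} {H : SimpleGraph W}
    {e : Prop} {k0 k1 k2 : ℕ} (hG : Col G e k0 k1 k2) (hH : Col H e k0 k1 k2) :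
    Nonempty (G ≃g H) := by
  classical
  obtain ⟨c, hc, c0, c1, c2⟩ := hG
  obtain ⟨d, hd, d0, d1, d2⟩ := hH
  have hcard : ∀ k : Fin 3, Fintype.card {x // c x = k} = Fintype.card {y // d y = k} := by
    intro k
    rw [Fintype.card_subtype, Fintype.card_subtype]
    fin_cases k
    · exact c0.trans d0.symm
    · exact c1.trans d1.symm
    · exact c2.trans d2.symm
  let E : V ≃ W := (Equiv.sigmaFiberEquiv c).symm.trans
    ((Equiv.sigmaCongrRight (fun k => Fintype.equivOfCardEq (hcard k))).trans
      (Equiv.sigmaFiberEquiv d))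
  have hE : ∀ x, d (E x) = c x := fun x =>
    (Fintype.equivOfCardEq (hcard (c x)) ⟨x, rfl⟩).2
  refine ⟨⟨E, ?_⟩⟩
  intro x y
  by_cases hxy : x = y
  · subst hxy; simp
  · rw [hd _ _ (fun h => hxy (E.injective h)), hc _ _ hxy, hE, hE]

lemma col_of_iso {V W : Type*} [Fintype V] [Fintype W] {G : SimpleGraph V} {H : SimpleGraph W}
    {e : Prop} {k0 k1 k2 : ℕ} (φ : G ≃g H) (hH : Col H e k0 k1 k2) : Col G e k0 k1 k2 := by
  classical
  obtain ⟨d, hd, d0, d1, d2⟩ := hH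
  have hcard : ∀ k : Fin 3, (Finset.univ.filter (fun x => d (φ x) = k)).card
      = (Finset.univ.filter (fun x => d x = k)).card := by
    intro k
    apply Finset.card_bij (fun x _ => φ x)
    · intro x hx; simpa using hx
    · intro x _ y _ h; exact φ.injective h
    · intro y hy
      refine ⟨φ.symm y, ?_, ?_⟩
      · simpa using hy
      · simp
  refine ⟨fun x => d (φ x), ?_, (hcard 0).trans d0, (hcard 1).trans d1, (hcard 2).trans d2⟩
  intro x y hxy
  rw [← hd _ _ (fun h => hxy (φ.injective h)), φ.map_adj_iff]

lemma col_K2 (m : ℕ) : Col (completeBipartiteGraph (Fin 2) (Fin m)) False 2 0 m := by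
  refine ⟨Sum.elim (fun _ => 0) (fun _ => 2), ?_, ?_, ?_, ?_⟩
  · rintro (x | x) (y | y) hxy <;> simp [Rule, completeBipartiteGraph]
  all_goals (simp only [Finset.card_filter, Fintype.sum_sum_type, Sum.elim_inl, Sum.elim_inr]; simp)

lemma col_bip (k : ℕ) : Col (bipPlusEdge k) True 2 k (k + 2) := by
  refine ⟨Sum.elim (Sum.elim (fun _ => 0) (fun _ => 1)) (fun _ => 2), ?_, ?_, ?_, ?_⟩
  · rintro ((x | x) | x) ((y | y) | y) hxy <;>
      simp [Rule, bipPlusEdge, completeBipartiteGraph]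
    have hxy' : x ≠ y := by
      rintro rfl; exact hxy rfl
    clear hxy
    revert x y; decide
  all_goals (simp only [Finset.card_filter, Fintype.sum_sum_type, Sum.elim_inl, Sum.elim_inr]; simp)

lemma col_star (k : ℕ) : Col (starPlusEdge k) True 2 k 1 := by
  refine ⟨Sum.elim (fun _ => 2) (Sum.elim (fun _ => 0) (fun _ => 1)), ?_, ?_, ?_, ?_⟩
  · rintro (x | x | x) (y | y | y) hxy <;>
      simp [Rule, starPlusEdge, completeBipartiteGraph]
    have hxy' : x ≠ y := by
      rintro rfl; exact hxy rfl
    clear hxy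
    revert x y; decide
  all_goals (simp only [Finset.card_filter, Fintype.sum_sum_type, Sum.elim_inl, Sum.elim_inr]; simp)

set_option maxHeartbeats 1000000 in
lemma backward {n : ℕ} (hn : 6 ≤ n) {G : SimpleGraph (Fin n)} (hG : G.Connected)
    {e : Prop} {k1 k2 : ℕ} (hcol : Col G e 2 k1 k2) (hk2 : 0 < k2) (hk2n : k2 < n)
    {l r : ℝ} (hl : n < l) (hr : 0 < r) (hr0 : l - 2 * r ≠ 0) (hrn : l - 2 * r ≠ n)
    (hAA : k1 ≠ 0 → l - n = n - k2) (hBB : k2 ≠ 1 → l - n = k2)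
    (he : e → 1 + (l - n) / (n - k2) - r = 1) (hne : ¬ e → 1 + (l - n) / (n - k2) - r = 2) :
    {μ : ℝ | Module.End.HasEigenvalue (distLaplacian G).mulVecLin μ}.ncard = 4 ∧
        eigMult (distLaplacian G) (lambdaMax (distLaplacian G)) = n - 3 := by
  obtain ⟨c, hc, c0, c1, c2⟩ := hcol
  obtain ⟨p, q, hpq, hpq2⟩ := Finset.card_eq_two.1 c0
  have h0 : ∀ x, c x = 0 ↔ x = p ∨ x = q := by
    intro x
    have : x ∈ Finset.univ.filter (fun x => c x = 0) ↔ x ∈ ({p, q} : Finset (Fin n)) := by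
      rw [hpq2]
    simpa using this
  have hp0 : c p = 0 := (h0 p).2 (Or.inl rfl)
  have hq0 : c q = 0 := (h0 q).2 (Or.inr rfl)
  obtain ⟨o, ho⟩ : ∃ o, c o = 2 := by
    obtain ⟨o, ho⟩ := Finset.card_pos.1 (by rw [c2]; exact hk2)
    exact ⟨o, by simpa using ho⟩
  have hc3 : (Finset.univ.filter (fun x => ¬ c x = 2)).card = n - k2 := by
    have := Finset.card_filter_add_card_filter_not (s := (Finset.univ : Finset (Fin n)))
      (fun x => c x = 2)
    rw [c2] at this
    simp at this
    omega
  obtain ⟨t, ht⟩ : ∃ t : ℝ, t = k2 := ⟨_, rfl⟩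
  obtain ⟨s, hs⟩ : ∃ s : ℝ, s = n - k2 := ⟨_, rfl⟩
  have hst : s + t = n := by rw [hs, ht]; ring
  have t0 : 0 < t := by rw [ht]; exact_mod_cast hk2
  have s0 : 0 < s := by
    rw [hs]
    have : (k2 : ℝ) < n := by exact_mod_cast hk2n
    linarith
  have hc3R : ((n - k2 : ℕ) : ℝ) = s := by rw [hs, Nat.cast_sub hk2n.le]
  have n0 : (0 : ℝ) < n := by linarith
  rw [← hs] at hAA he hne
  rw [← ht] at hBB
  -- distances
  have d1 : ∀ x y, x ≠ y → Rule e (c x) (c y) → (G.dist x y : ℝ) = 1 := by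
    intro x y hxy h
    rw [SimpleGraph.dist_eq_one_iff_adj.2 ((hc x y hxy).2 h)]; norm_num
  have d2 : ∀ x y, x ≠ y → ¬ Rule e (c x) (c y) → (G.dist x y : ℝ) = 2 := by
    intro x y hxy h
    have hna : ¬ G.Adj x y := fun h' => h ((hc x y hxy).1 h')
    have h1 := hG.one_lt_dist_of_ne_of_not_adj hxy hna
    obtain ⟨w, hw1, hw2⟩ : ∃ w, G.Adj x w ∧ G.Adj w y := by
      by_cases hx : c x = 2
      · have hy : c y = 2 := by
          by_contra hy
          exact h (Or.inr (Or.inr ⟨hx, hy⟩))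
        refine ⟨p, (hc x p ?_).2 ?_, (hc p y ?_).2 ?_⟩
        · rintro rfl; rw [hp0] at hx; simp at hx
        · right; right; rw [hp0]; exact ⟨hx, by simp⟩
        · rintro rfl; rw [hp0] at hy; simp at hy
        · right; left; rw [hp0]; exact ⟨by simp, hy⟩
      · have hy : c y ≠ 2 := by
          intro hy
          exact h (Or.inr (Or.inl ⟨hx, hy⟩))
        refine ⟨o, (hc x o ?_).2 ?_, (hc o y ?_).2 ?_⟩
        · rintro rfl; exact hx ho
        · right; left; exact ⟨hx, ho⟩
        · rintro rfl; exact hy ho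
        · right; right; exact ⟨ho, hy⟩
    have h2 := hG.dist_triangle (u := x) (v := w) (w := y)
    rw [SimpleGraph.dist_eq_one_iff_adj.2 hw1, SimpleGraph.dist_eq_one_iff_adj.2 hw2] at h2
    have : G.dist x y = 2 := by omega
    rw [this]; norm_num
  -- the vectors
  obtain ⟨z, hz⟩ : ∃ z : Fin n → ℝ, z = fun i => if c i = 2 then -s else t := ⟨_, rfl⟩
  obtain ⟨h, hh⟩ : ∃ h : Fin n → ℝ, h = fun i => (if i = p then 1 else 0) - (if i = q then 1 else 0) :=
    ⟨_, rfl⟩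
  have cnt : ∀ a b : ℝ, ∑ i, (if c i = 2 then a else b) = t * a + s * b := by
    intro a b
    rw [Finset.sum_ite]
    simp only [Finset.sum_const, nsmul_eq_mul, c2, hc3, hc3R, ← ht]
  have hdot : ∀ w : Fin n → ℝ, w ⬝ᵥ h = w p - w q := by
    intro w
    simp [hh, dotProduct, mul_sub, Finset.sum_sub_distrib]
  have zp : z p = t := by rw [hz]; simp [hp0]
  have zq : z q = t := by rw [hz]; simp [hq0]
  have hhp : h p = 1 := by rw [hh]; simp [hpq]
  have hhq : h q = -1 := by rw [hh]; simp [hpq.symm]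
  have h11 : (fun _ : Fin n => (1 : ℝ)) ⬝ᵥ (fun _ => 1) = n := by simp [dotProduct]
  have h12 : (fun _ : Fin n => (1 : ℝ)) ⬝ᵥ z = 0 := by
    simp only [dotProduct, one_mul, hz]
    rw [cnt]; ring
  have h22 : z ⬝ᵥ z = s * t * n := by
    have : ∀ i, z i * z i = if c i = 2 then s * s else t * t := by
      intro i; rw [hz]; dsimp only; split_ifs <;> ring
    simp only [dotProduct, this]
    rw [cnt, ← hst]; ring
  have h13 : (fun _ : Fin n => (1 : ℝ)) ⬝ᵥ h = 0 := by rw [hdot]; ring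
  have h23 : z ⬝ᵥ h = 0 := by rw [hdot, zp, zq]; ring
  have h33 : h ⬝ᵥ h = 2 := by rw [hdot, hhp, hhq]; norm_num
  have hoff : ∀ i j, i ≠ j → (G.dist i j : ℝ)
      = l / n + (l - n) / (s * t * n) * z i * z j + r * h i * h j := by
    have hhz : ∀ i, c i ≠ 0 → h i = 0 := by
      intro i hi
      rw [Ne, h0, not_or] at hi
      rw [hh]; simp [hi.1, hi.2]
    have zA : ∀ i, c i ≠ 2 → z i = t := by intro i hi; rw [hz]; simp [hi]
    have zB : ∀ i, c i = 2 → z i = -s := by intro i hi; rw [hz]; simp [hi]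
    have vA : l / n + (l - n) / (s * t * n) * t * t = 1 + (l - n) / s := by
      rw [← hst]; field_simp; ring
    have vB : l / n + (l - n) / (s * t * n) * -s * -s = 1 + (l - n) / t := by
      rw [← hst]; field_simp; ring
    have vAB : l / n + (l - n) / (s * t * n) * t * -s = 1 := by
      field_simp; ring
    have vBA : l / n + (l - n) / (s * t * n) * -s * t = 1 := by
      field_simp; ring
    intro i j hij
    by_cases hi : c i = 2
    · have hi0 : h i = 0 := hhz i (by rw [hi]; simp)
      by_cases hj : c j = 2
      · have hj0 : h j = 0 := hhz j (by rw [hj]; simp)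
        rw [d2 i j hij (by rw [hi, hj]; simp [Rule]), zB i hi, zB j hj, vB, hi0]
        have : k2 ≠ 1 := by
          intro hk
          rw [hk] at c2
          obtain ⟨x, hx⟩ := Finset.card_eq_one.1 c2
          have e1 : i ∈ ({x} : Finset (Fin n)) := by rw [← hx]; simp [hi]
          have e2 : j ∈ ({x} : Finset (Fin n)) := by rw [← hx]; simp [hj]
          rw [Finset.mem_singleton] at e1 e2
          exact hij (e1.trans e2.symm)
        rw [hBB this, div_self t0.ne']; ring
      · rw [d1 i j hij (Or.inr (Or.inr ⟨hi, hj⟩)), zB i hi, zA j hj, vBA, hi0]; ring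
    · by_cases hj : c j = 2
      · have hj0 : h j = 0 := hhz j (by rw [hj]; simp)
        rw [d1 i j hij (Or.inr (Or.inl ⟨hi, hj⟩)), zA i hi, zB j hj, vAB, hj0]; ring
      · rw [zA i hi, zA j hj, vA]
        by_cases hboth : c i = 0 ∧ c j = 0
        · have hprod : h i * h j = -1 := by
            rcases (h0 i).1 hboth.1 with rfl | rfl <;> rcases (h0 j).1 hboth.2 with rfl | rfl
            · exact absurd rfl hij
            · rw [hhp, hhq]; norm_num
            · rw [hhp, hhq]; norm_num
            · exact absurd rfl hij
          rw [mul_assoc r, hprod]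
          by_cases hee : e
          · rw [d1 i j hij (Or.inl ⟨hboth.1, hboth.2, hee⟩)]
            have := he hee; linarith
          · rw [d2 i j hij (by rw [hboth.1, hboth.2]; simp [Rule, hee])]
            have := hne hee; linarith
        · have hprod : h i * h j = 0 := by
            by_cases h1 : c i = 0
            · rw [hhz j (fun h2 => hboth ⟨h1, h2⟩), mul_zero]
            · rw [hhz i h1, zero_mul]
          have hk : k1 ≠ 0 := by
            intro hk
            rw [hk, Finset.card_eq_zero] at c1
            have none : ∀ x, c x ≠ 1 := by
              intro x hx
              have : x ∈ Finset.univ.filter (fun x => c x = 1) := by simp [hx]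
              rw [c1] at this
              simp at this
            have := none i
            have := none j
            omega
          rw [mul_assoc r, hprod, hAA hk, div_self s0.ne',
            d2 i j hij (by simp only [Rule]; tauto)]
          ring
  have two : (l - (l - 2 * r)) / (h ⬝ᵥ h) = r := by rw [h33]; ring
  have hM : ∀ i j, distLaplacian G i j = (if i = j then l else 0)
      - (l - 0) / ((fun _ : Fin n => (1 : ℝ)) ⬝ᵥ (fun _ => 1)) * (fun _ : Fin n => (1 : ℝ)) i
        * (fun _ : Fin n => (1 : ℝ)) j
      - (l - n) / (z ⬝ᵥ z) * z i * z j - (l - (l - 2 * r)) / (h ⬝ᵥ h) * h i * h j := by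
    rw [two, h11, h22]
    have off : ∀ i j, i ≠ j → distLaplacian G i j = (if i = j then l else 0)
      - (l - 0) / n * 1 * 1 - (l - n) / (s * t * n) * z i * z j - r * h i * h j := by
      intro i j hij
      rw [DL_off G hij, hoff i j hij, if_neg hij]; ring
    intro i j
    by_cases hij : i = j
    · subst hij
      have r1 : ∑ j, distLaplacian G i j = 0 := by
        have := congrFun (DL_one G) i
        simpa [Matrix.mulVec, dotProduct] using this
      have sz : ∑ j, z j = 0 := by simpa [dotProduct] using h12
      have sh : ∑ j, h j = 0 := by simpa [dotProduct] using h13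
      have r2 : ∑ j, ((if i = j then l else 0)
          - (l - 0) / n * 1 * 1 - (l - n) / (s * t * n) * z i * z j - r * h i * h j) = 0 := by
        rw [Finset.sum_sub_distrib, Finset.sum_sub_distrib, Finset.sum_sub_distrib,
          ← Finset.mul_sum, ← Finset.mul_sum, ← Finset.mul_sum, sz, sh]
        simp
        field_simp
        ring
      have r3 := Finset.sum_eq_single (s := Finset.univ) (f := fun j => distLaplacian G i j
        - ((if i = j then l else 0)
          - (l - 0) / n * 1 * 1 - (l - n) / (s * t * n) * z i * z j - r * h i * h j)) i
        (fun j _ hj => by rw [off i j hj.symm]; ring) (by simp)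
      rw [Finset.sum_sub_distrib, r1, r2] at r3
      linarith
    · exact off i j hij
  exact spectrum_of_decomp hn (distLaplacian G) (l := l) (a := 0) (b := n) (c := l - 2 * r)
    (by linarith) hl (by linarith) n0.ne (Ne.symm hr0) (Ne.symm hrn) (by rw [h11]; exact n0.ne')
    (by rw [h22]; positivity) (by rw [h33]; norm_num) h12 h13 h23 hM

lemma backward_col {n : ℕ} (hn : 6 ≤ n) {G : SimpleGraph (Fin n)} (hG : G.Connected)
    (h : Col G False 2 0 (n - 2) ∨ (Even n ∧ Col G True 2 (n / 2 - 2) (n / 2)) ∨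
      Col G True 2 (n - 3) 1) :
    {μ : ℝ | Module.End.HasEigenvalue (distLaplacian G).mulVecLin μ}.ncard = 4 ∧
        eigMult (distLaplacian G) (lambdaMax (distLaplacian G)) = n - 3 := by
  have hnR : (6 : ℝ) ≤ n := by exact_mod_cast hn
  rcases h with h | ⟨⟨m, hm⟩, h⟩ | h
  · have e2 : ((n - 2 : ℕ) : ℝ) = n - 2 := by rw [Nat.cast_sub (by omega)]; norm_num
    have e3 : (n : ℝ) - (n - 2) = 2 := by ring
    apply backward hn hG h (by omega) (by omega) (l := 2 * n - 2) (r := (n - 4) / 2)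
    · linarith
    · linarith
    · intro h; linarith
    · intro h; linarith
    · intro h; exact absurd rfl h
    · intro _; rw [e2]; ring
    · intro h; exact h.elim
    · intro _; rw [e2, e3]; ring
  · have hm2 : n / 2 = m := by omega
    rw [hm2] at h
    have hmR : (n : ℝ) = m + m := by exact_mod_cast hm
    apply backward hn hG h (by omega) (by omega) (l := n + m) (r := 1)
    · linarith
    · norm_num
    · intro h; linarith
    · intro h; linarith
    · intro _; linarith
    · intro _; ring
    · intro _
      have : (n : ℝ) - m = m := by linarith
      have h3 : (n : ℝ) + m - n = m := by ring
      have h4 : (m : ℝ) ≠ 0 := by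
        intro h; linarith
      rw [this, h3, div_self h4]; ring
    · intro h; exact absurd trivial h
  · apply backward hn hG h (by omega) (by omega) (l := 2 * n - 1) (r := 1)
    · linarith
    · norm_num
    · intro h; linarith
    · intro h; linarith
    · intro _; push_cast; ring
    · intro h; exact absurd rfl h
    · intro _
      have : 2 * (n : ℝ) - 1 - n = n - (1 : ℕ) := by push_cast; ring
      rw [this, div_self (by push_cast; linarith)]; ring
    · intro h; exact absurd trivial h

/-- For `n ≥ 6`, a connected graph `G` on `n` vertices has exactly four
distinct distance Laplacian eigenvalues with the largest one of multiplicity `n - 3` if and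
only if `G` is isomorphic to one of `K_{2,n-2}`, `K_{n/2,n/2}+e` (`n` even), `K_{1,n-1}+e`. -/
theorem four_distinct_eigenvalues_classification
    (n : ℕ) (hn : 6 ≤ n) (G : SimpleGraph (Fin n)) (hG : G.Connected) :
    ({μ : ℝ | Module.End.HasEigenvalue (distLaplacian G).mulVecLin μ}.ncard = 4 ∧
        eigMult (distLaplacian G) (lambdaMax (distLaplacian G)) = n - 3) ↔
      (Nonempty (G ≃g completeBipartiteGraph (Fin 2) (Fin (n - 2))) ∨
        (Even n ∧ Nonempty (G ≃g bipPlusEdge (n / 2 - 2))) ∨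
        Nonempty (G ≃g starPlusEdge (n - 3))) := by
  have key : ((Nonempty (G ≃g completeBipartiteGraph (Fin 2) (Fin (n - 2))) ∨
        (Even n ∧ Nonempty (G ≃g bipPlusEdge (n / 2 - 2))) ∨
        Nonempty (G ≃g starPlusEdge (n - 3)))) ↔
      (Col G False 2 0 (n - 2) ∨ (Even n ∧ Col G True 2 (n / 2 - 2) (n / 2)) ∨
      Col G True 2 (n - 3) 1) := by
    have h2 : n / 2 = n / 2 - 2 + 2 := by omega
    have hb : Col (bipPlusEdge (n / 2 - 2)) True 2 (n / 2 - 2) (n / 2) :=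
      h2.symm.rec (motive := fun a _ => Col (bipPlusEdge (n / 2 - 2)) True 2 (n / 2 - 2) a)
        (col_bip (n / 2 - 2))
    constructor
    · rintro (⟨⟨φ⟩⟩ | ⟨he, ⟨φ⟩⟩ | ⟨⟨φ⟩⟩)
      · exact Or.inl (col_of_iso φ (col_K2 _))
      · exact Or.inr (Or.inl ⟨he, col_of_iso φ hb⟩)
      · exact Or.inr (Or.inr (col_of_iso φ (col_star _)))
    · rintro (h | ⟨he, h⟩ | h)
      · exact Or.inl (iso_of_col h (col_K2 _))
      · exact Or.inr (Or.inl ⟨he, iso_of_col h hb⟩)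
      · exact Or.inr (Or.inr (iso_of_col h (col_star _)))
  rw [key]
  constructor
  · rintro ⟨h1, h2⟩
    exact forward_col hn G hG h1 h2
  · exact backward_col hn hG
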